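/- arXiv:1809.06912 — 2 statements merged into one kernel-verified Lean document; each statement's English description precedes it below -/
import Mathlib

section
/- Let m, d, ℓ ∈ ℕ with ℓ > d, let C > 0, and let V ⊆ ℚ^d be a linear subspace containing the vector (1, 1, …, 1). Suppose that there exists N₀ such that for every N ≥ N₀ and every function c : [N]^m → [0, 1] one has (1/|V ∩ [N]^d|^m) Σ c(a₁)c(a₂)⋯c(a_d) ≥ C (1 − d/ℓ)^ℓ ‖c‖_{L¹}^ℓ, where the sum is over all tuples (a₁, …, a_d) with each a_i ∈ [N]^m such that (a₁(j), …, a_d(j)) ∈ V for every j ∈ {1, …, m}. Let V̄ ⊆ ℝ^d be the closure of V in ℝ^d, and let Y := (V̄/ℤ^d)^m, a closed subgroup (subtorus) of 𝕋^{d×m} with Haar probability measure μ_Y; write a point of Y as (y₁, …, y_d) with each y_i ∈ 𝕋^m, where (y₁(j), …, y_d(j)) ∈ V̄/ℤ^d for each j. Then for every measurable function f : 𝕋^m → [0, 1], ∫_Y f(y₁) f(y₂) ⋯ f(y_d) dμ_Y(y₁, …, y_d) ≥ C (1 − d/ℓ)^ℓ (∫_{𝕋^m} f dμ_{𝕋^m})^ℓ,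 where μ_{𝕋^m} is the Haar probability measure on 𝕋^m = (ℝ/ℤ)^m. -/
/-- `q : Fin d → Fin m → ℕ` satisfies the condition `V^m`: for every coordinate `j`,
the vector `(q 0 j, …, q (d-1) j)` lies in `V`. -/
def inVm {d m : ℕ} (V : Submodule ℚ (Fin d → ℚ)) (q : Fin d → Fin m → ℕ) : Prop :=
  ∀ j : Fin m, (fun i : Fin d => ((q i j : ℕ) : ℚ)) ∈ V

/-- The number of points of `[N]^d` lying in `V`. -/
noncomputable def VboxCard {d : ℕ} (V : Submodule ℚ (Fin d → ℚ)) (N : ℕ) : ℕ :=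
  Set.ncard {x : Fin d → ℕ | (∀ i, x i < N) ∧ (fun i : Fin d => ((x i : ℕ) : ℚ)) ∈ V}

/-- The density `d_{m,N}(E) = |E| / N^m`. -/
noncomputable def dmn (m N : ℕ) (E : Set (Fin m → ℕ)) : ℝ :=
  (E.ncard : ℝ) / (N : ℝ) ^ m

/-- The density `D_{m,N}(V^m, E)` of solutions of the linear system determined by `V`
with entries in `E`, among all solutions with entries in `[N]^m`. -/
noncomputable def Dmn {d : ℕ} (V : Submodule ℚ (Fin d → ℚ)) (m N : ℕ)
    (E : Set (Fin m → ℕ)) : ℝ :=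
  (Set.ncard {q : Fin d → Fin m → ℕ | (∀ i, q i ∈ E) ∧ inVm V q} : ℝ) /
    (Set.ncard {q : Fin d → Fin m → ℕ | (∀ i j, q i j < N) ∧ inVm V q} : ℝ)

/-- The normalized sum `(1/|V ∩ [N]^d|^m) Σ c(a₁)⋯c(a_d)` over tuples
`(a₁, …, a_d) ∈ ([N]^m)^d` satisfying the condition `V^m`. -/
noncomputable def solutionAvg {d m : ℕ} (V : Submodule ℚ (Fin d → ℚ)) (N : ℕ)
    (c : (Fin m → ℕ) → ℝ) : ℝ :=
  (∑ᶠ q ∈ {q : Fin d → Fin m → ℕ | (∀ i j, q i j < N) ∧ inVm V q},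
      ∏ i : Fin d, c (q i)) / (VboxCard V N : ℝ) ^ m

/-- The weak `L^q` quasinorm of `c : [N]^m → ℝ` with the normalized counting measure. -/
noncomputable def weakNormBox (m N : ℕ) (q : ℝ) (c : (Fin m → ℕ) → ℝ) : ℝ :=
  ⨆ s : ℝ, if 0 < s then
    s * ((Set.ncard {a : Fin m → ℕ | (∀ j, a j < N) ∧ s < |c a|} : ℝ) / (N : ℝ) ^ m) ^ (1 / q)
  else 0

/-- The `L¹` norm of `c : [N]^m → ℝ` with the normalized counting measure. -/
noncomputable def l1NormBox (m N : ℕ) (c : (Fin m → ℕ) → ℝ) : ℝ :=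
  (∑ᶠ a ∈ {a : Fin m → ℕ | ∀ j, a j < N}, |c a|) / (N : ℝ) ^ m

open MeasureTheory

/-! Let `α` be irrational modulo `1`. The closure of the set of points `(wᵢ α)ᵢ`, where `w` runs
over the integer points of `V`, is the subtorus of `V`, so the homomorphism taking an array `q` of
`m` such integer points to `(qⱼᵢ α)ᵢⱼ` has dense image in `Y`. The solutions in `[N]^m` form an
order interval in the group of these arrays. Their number grows polynomially in `N`, hence along
some sequence of `N` they form a Følner sequence, and averages of continuous functions over it
converge to integrals over `Y`. For continuous `g`, applying the hypothesis to `a ↦ g (a α)` and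
passing to the limit thus gives the inequality for `g`; measurable functions follow by dominated
convergence. -/

/-! ### Følner boxes in ordered groups -/

section Folner

open Filter Finset
open scoped BigOperators Pointwise symmDiff Topology

theorem exists_add_le_mul_of_le_pow {a : ℕ → ℝ} (hpos : ∀ n, 0 < a n) {k : ℕ}
    (hle : ∀ n, a n ≤ (n + 1 : ℝ) ^ k) {r : ℝ} (hr : 1 < r) (s n₀ : ℕ) :
    ∃ n ≥ n₀, a (n + s) ≤ r * a n := by
  by_contra! hcon
  -- Otherwise `a` grows geometrically along the progression `n₀ + s * j`.
  have hexp (j : ℕ) : r ^ j * a n₀ ≤ a (n₀ + s * j) := by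
    induction j with
    | zero => simp
    | succ j ih =>
      calc r ^ (j + 1) * a n₀ = r * (r ^ j * a n₀) := by ring
        _ ≤ r * a (n₀ + s * j) := by gcongr
        _ ≤ a (n₀ + s * (j + 1)) := by
          have := (hcon (n₀ + s * j) (Nat.le_add_right ..)).le
          rwa [add_assoc, ← mul_add_one] at this
  have hbound (j : ℕ) (hj : 1 ≤ j) : a n₀ ≤ (n₀ + s + 1 : ℝ) ^ k * (j ^ k / r ^ j) := by
    have hj' : (1 : ℝ) ≤ j := by exact_mod_cast hj
    rw [← mul_div_assoc, ← mul_pow, le_div_iff₀' (by positivity)]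
    refine (hexp j).trans ((hle _).trans (pow_le_pow_left₀ (by positivity) ?_ k))
    push_cast
    nlinarith [mul_nonneg (by positivity : (0 : ℝ) ≤ n₀ + 1) (sub_nonneg.2 hj')]
  have hlim := (tendsto_pow_const_div_const_pow_of_one_lt k hr).const_mul ((n₀ + s + 1 : ℝ) ^ k)
  rw [mul_zero] at hlim
  exact (hpos n₀).not_ge (ge_of_tendsto hlim ((eventually_ge_atTop 1).mono hbound))

theorem exists_filter_tendsto_div_of_le_pow {a : ℕ → ℝ} (hmono : Monotone a)
    (hpos : ∀ n, 0 < a n) {k : ℕ} (hle : ∀ n, a n ≤ (n + 1 : ℝ) ^ k) :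
    ∃ l : Filter ℕ, l ≤ atTop ∧ l.NeBot ∧ l.IsCountablyGenerated ∧
      ∀ s, Tendsto (fun n => a (n + s) / a n) l (𝓝 1) := by
  choose N hN hNle using fun j : ℕ =>
    exists_add_le_mul_of_le_pow hpos hle (lt_add_of_pos_right 1 (Nat.one_div_pos_of_nat (n := j)))
      j j
  refine ⟨map N atTop, tendsto_atTop_mono hN tendsto_id, inferInstance, inferInstance,
    fun s => tendsto_map'_iff.2 ?_⟩
  have hupper : Tendsto (fun j : ℕ => 1 + 1 / ((j : ℝ) + 1)) atTop (𝓝 1) := by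
    simpa using tendsto_one_div_add_atTop_nhds_zero_nat.const_add (1 : ℝ)
  refine tendsto_of_tendsto_of_tendsto_of_le_of_le' tendsto_const_nhds hupper
    (.of_forall fun j => (one_le_div (hpos _)).2 (hmono (Nat.le_add_right ..))) ?_
  filter_upwards [eventually_ge_atTop s] with j hj
  exact (div_le_iff₀ (hpos _)).2 ((hmono (by omega)).trans (hNle j))

/-- An order unit of an ordered abelian group: a nonnegative element whose multiples eventually
dominate every element. -/
structure IsOrderUnit {A : Type*} [AddCommGroup A] [PartialOrder A] (u : A) : Prop where
  nonneg : 0 ≤ u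
  exists_le_nsmul (a : A) : ∃ s : ℕ, a ≤ s • u

namespace IsOrderUnit

theorem int_one : IsOrderUnit (1 : ℤ) where
  nonneg := zero_le_one
  exists_le_nsmul a := ⟨a.toNat, by simp⟩

theorem pi {ι : Type*} [Finite ι] {B : ι → Type*} [∀ i, AddCommGroup (B i)]
    [∀ i, PartialOrder (B i)] [∀ i, IsOrderedAddMonoid (B i)] {u : ∀ i, B i}
    (hu : ∀ i, IsOrderUnit (u i)) : IsOrderUnit u where
  nonneg i := (hu i).nonneg
  exists_le_nsmul a := by
    have := Fintype.ofFinite ι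
    choose s hs using fun i => (hu i).exists_le_nsmul (a i)
    exact ⟨univ.sup s, fun i =>
      (hs i).trans (nsmul_le_nsmul_left (hu i).nonneg (le_sup (mem_univ i)))⟩

theorem addSubgroup {A : Type*} [AddCommGroup A] [PartialOrder A] {Λ : AddSubgroup A} {u : A}
    (hu : IsOrderUnit u) (huΛ : u ∈ Λ) : IsOrderUnit (⟨u, huΛ⟩ : Λ) where
  nonneg := hu.nonneg
  exists_le_nsmul a := hu.exists_le_nsmul a

section LocallyFinite

variable {A : Type*} [AddCommGroup A] [PartialOrder A] [IsOrderedAddMonoid A] [LocallyFiniteOrder A]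
  {u : A}

theorem Icc_zero_nsmul_nonempty (hu : IsOrderUnit u) (n : ℕ) : (Icc 0 (n • u)).Nonempty :=
  nonempty_Icc.2 (nsmul_nonneg hu.nonneg n)

theorem card_Icc_zero_nsmul_mono (hu : IsOrderUnit u) : Monotone fun n : ℕ => #(Icc 0 (n • u)) :=
  fun _ _ h => card_le_card (Icc_subset_Icc_right (nsmul_le_nsmul_left hu.nonneg h))

theorem card_vadd_symmDiff_Icc_le [DecidableEq A] (hu : IsOrderUnit u) {a : A} {s : ℕ}
    (has : a ≤ s • u) (has' : -a ≤ s • u) (n : ℕ) :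
    (#((a +ᵥ Icc 0 (n • u)) ∆ Icc 0 (n • u)) : ℝ) ≤
      2 * (#(Icc 0 ((n + 2 * s) • u)) - #(Icc 0 (n • u))) := by
  set S := Icc 0 (n • u)
  set T := Icc (-(s • u)) ((n + s) • u)
  have hsu : 0 ≤ s • u := nsmul_nonneg hu.nonneg s
  have hST : S ⊆ T := Icc_subset_Icc (neg_nonpos.2 hsu)
    (nsmul_le_nsmul_left hu.nonneg (Nat.le_add_right ..))
  have haST : a +ᵥ S ⊆ T := by
    intro x hx
    obtain ⟨q, hq, rfl⟩ := mem_vadd_finset.1 hx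
    have ⟨hq0, hqn⟩ := mem_Icc.1 hq
    refine mem_Icc.2 ⟨(neg_le.1 has').trans (le_add_of_nonneg_right hq0), ?_⟩
    rw [add_nsmul, add_comm (n • u)]
    exact add_le_add has hqn
  have hT : #T = #(Icc 0 ((n + 2 * s) • u)) := by
    have : T.image (· + s • u) = Icc 0 ((n + 2 * s) • u) := by
      rw [image_add_right_Icc, neg_add_cancel, ← add_nsmul]
      congr 2
      omega
    rw [← this, card_image_of_injective _ (add_left_injective _)]
  have hsdiff : #((a +ᵥ S) ∆ S) ≤ #(T \ S) + #(T \ (a +ᵥ S)) := by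
    rw [symmDiff_def]
    exact (card_union_le _ _).trans (add_le_add (card_le_card (sdiff_subset_sdiff haST le_rfl))
      (card_le_card (sdiff_subset_sdiff hST le_rfl)))
  rw [card_sdiff_of_subset hST, card_sdiff_of_subset haST, card_vadd_finset, hT] at hsdiff
  have hle : #S ≤ #(Icc 0 ((n + 2 * s) • u)) := hT ▸ card_le_card hST
  have := (Nat.cast_le (α := ℝ)).2 hsdiff
  push_cast [hle] at this
  linarith

end LocallyFinite
end IsOrderUnit

/-! ### Equidistribution along Følner boxes -/

section Averages

variable {A ι : Type*} [AddCommGroup A] {l : Filter ι} {S : ι → Finset A}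

theorem isAddFoelner_count_iff [DecidableEq A] [MeasurableSpace A] [MeasurableSingletonClass A] :
    IsAddFoelner A Measure.count l (fun i => (S i : Set A)) ↔
      (∀ᶠ i in l, (S i).Nonempty) ∧
        ∀ a : A, Tendsto (fun i => (#((a +ᵥ S i) ∆ S i) : ℝ) / #(S i)) l (𝓝 0) := by
  have hcount (a : A) (i : ι) :
      Measure.count ((a +ᵥ (S i : Set A)) ∆ (S i : Set A)) = #((a +ᵥ S i) ∆ S i) := by
    rw [← coe_vadd_finset, ← coe_symmDiff, Measure.count_apply_finset]
  have hlim (a : A) :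
      Tendsto (fun i => (#((a +ᵥ S i) ∆ S i) / #(S i) : ENNReal)) l (𝓝 0) ↔
        Tendsto (fun i => (#((a +ᵥ S i) ∆ S i) : ℝ) / #(S i)) l (𝓝 0) := by
    have hne_top (i : ι) : (#((a +ᵥ S i) ∆ S i) / #(S i) : ENNReal) ≠ ⊤ := by
      rcases (S i).eq_empty_or_nonempty with hi | hi
      · simp [hi]
      · exact ENNReal.div_ne_top (by simp) (by simpa using hi.ne_empty)
    rw [← ENNReal.tendsto_toReal_zero_iff hne_top]
    simp only [ENNReal.toReal_div, ENNReal.toReal_natCast]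
  simp [isAddFoelner_iff, hcount, hlim, nonempty_iff_ne_empty, Finset.measurableSet]

theorem isAddFoelner_Icc_zero_nsmul [PartialOrder A] [IsOrderedAddMonoid A] [LocallyFiniteOrder A]
    [MeasurableSpace A] [MeasurableSingletonClass A] {u : A} (hu : IsOrderUnit u) {l : Filter ℕ}
    (hl : ∀ s, Tendsto (fun n => (#(Icc 0 ((n + s) • u)) : ℝ) / #(Icc 0 (n • u))) l (𝓝 1)) :
    IsAddFoelner A Measure.count l fun n => ((Icc 0 (n • u) : Finset A) : Set A) := by
  classical
  refine isAddFoelner_count_iff.2 ⟨.of_forall hu.Icc_zero_nsmul_nonempty, fun a => ?_⟩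
  obtain ⟨s, hs⟩ := hu.exists_le_nsmul a
  obtain ⟨t, ht⟩ := hu.exists_le_nsmul (-a)
  have hlim := ((hl (2 * (s + t))).sub_const 1).const_mul 2
  rw [sub_self, mul_zero] at hlim
  refine squeeze_zero (fun n => by positivity) (fun n => ?_) hlim
  have hpos : (0 : ℝ) < #(Icc 0 (n • u)) := mod_cast (hu.Icc_zero_nsmul_nonempty n).card_pos
  rw [div_sub_one hpos.ne', ← mul_div_assoc]
  gcongr
  exact hu.card_vadd_symmDiff_Icc_le
    (hs.trans (nsmul_le_nsmul_left hu.nonneg (Nat.le_add_right ..)))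
    (ht.trans (nsmul_le_nsmul_left hu.nonneg (Nat.le_add_left ..))) n

theorem exists_filter_isAddFoelner_Icc_zero_nsmul [PartialOrder A] [IsOrderedAddMonoid A]
    [LocallyFiniteOrder A] [MeasurableSpace A] [MeasurableSingletonClass A] {u : A}
    (hu : IsOrderUnit u) {k : ℕ} (hle : ∀ n : ℕ, #(Icc 0 (n • u)) ≤ (n + 1) ^ k) :
    ∃ l : Filter ℕ, l ≤ atTop ∧ l.NeBot ∧ l.IsCountablyGenerated ∧
      IsAddFoelner A Measure.count l fun n => ((Icc 0 (n • u) : Finset A) : Set A) := by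
  obtain ⟨l, hl, hne, hgen, hlim⟩ := exists_filter_tendsto_div_of_le_pow
    (a := fun n => #(Icc 0 (n • u))) (Nat.mono_cast.comp hu.card_Icc_zero_nsmul_mono)
    (fun n => mod_cast (hu.Icc_zero_nsmul_nonempty n).card_pos) fun n => mod_cast hle n
  exact ⟨l, hl, hne, hgen, isAddFoelner_Icc_zero_nsmul hu hlim⟩

theorem abs_expect_add_sub_expect_le [DecidableEq A] (S : Finset A) (a : A) {H : A → ℝ} {B : ℝ}
    (hH : ∀ q, |H q| ≤ B) :
    |𝔼 q ∈ S, H (a + q) - 𝔼 q ∈ S, H q| ≤ B * (#((a +ᵥ S) ∆ S) / #S) := by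
  have hshift : ∑ q ∈ S, H (a + q) = ∑ q ∈ a +ᵥ S, H q :=
    (sum_image fun _ _ _ _ h => add_left_cancel h).symm
  rw [expect_eq_sum_div_card, expect_eq_sum_div_card, ← sub_div, abs_div, Nat.abs_cast, hshift,
    ← mul_div_assoc]
  gcongr
  calc |∑ q ∈ a +ᵥ S, H q - ∑ q ∈ S, H q|
      = |∑ q ∈ (a +ᵥ S) \ S, H q - ∑ q ∈ S \ (a +ᵥ S), H q| := by
        rw [sum_sdiff_sub_sum_sdiff]
    _ ≤ ∑ q ∈ (a +ᵥ S) \ S, |H q| + ∑ q ∈ S \ (a +ᵥ S), |H q| :=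
        (abs_sub _ _).trans (add_le_add (abs_sum_le_sum_abs ..) (abs_sum_le_sum_abs ..))
    _ = ∑ q ∈ (a +ᵥ S) ∆ S, |H q| := (sum_union disjoint_sdiff_sdiff).symm
    _ ≤ B * #((a +ᵥ S) ∆ S) := by
        rw [mul_comm, ← nsmul_eq_mul]
        exact sum_le_card_nsmul _ _ _ fun q _ => hH q

theorem integral_expect_add {κ G : Type*} [AddCommGroup G] [TopologicalSpace G]
    [IsTopologicalAddGroup G] [CompactSpace G] [MeasurableSpace G] [BorelSpace G] {μ : Measure G}
    [IsFiniteMeasure μ] (F : C(G, ℝ)) {T : Finset κ} (hT : T.Nonempty) {φ : κ → G}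
    (hinv : ∀ a, μ.map (· + φ a) = μ) :
    ∫ y, 𝔼 q ∈ T, F (y + φ q) ∂μ = ∫ y, F y ∂μ := by
  have hint (q : κ) : Integrable (fun y => F (y + φ q)) μ :=
    (by fun_prop : Continuous fun y => F (y + φ q)).integrable_of_hasCompactSupport
      (.of_compactSpace _)
  have htranslate (q : κ) : ∫ y, F (y + φ q) ∂μ = ∫ y, F y ∂μ := by
    conv_rhs => rw [← hinv q]
    rw [integral_map (by fun_prop) F.continuous.aestronglyMeasurable]
  simp only [expect_eq_sum_div_card]
  rw [integral_div, integral_finsetSum _ fun q _ => hint q]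
  simp only [htranslate, ← expect_eq_sum_div_card, expect_const hT]

variable [MeasurableSpace A] [MeasurableSingletonClass A] {G : Type*} [AddCommGroup G]
  [TopologicalSpace G] [IsTopologicalAddGroup G] [CompactSpace G]

theorem tendsto_expect_add_sub_expect_of_mem_closure
    (hS : IsAddFoelner A Measure.count l fun i => (S i : Set A)) (φ : A →+ G) (F : C(G, ℝ)) {y : G}
    (hy : y ∈ closure (Set.range φ)) :
    Tendsto (fun i => 𝔼 q ∈ S i, F (y + φ q) - 𝔼 q ∈ S i, F (φ q)) l (𝓝 0) := by
  classical
  obtain ⟨hne, hlim⟩ := isAddFoelner_count_iff.1 hS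
  -- Translation is continuous into the sup norm, so `y` can be replaced by some `φ a` nearby.
  let translate : C(G, C(G, ℝ)) :=
    ContinuousMap.curry ⟨fun p : G × G => F (p.1 + p.2), by fun_prop⟩
  refine Metric.tendsto_nhds.2 fun ε hε => ?_
  obtain ⟨_, ⟨_, ⟨a, rfl⟩, rfl⟩, ha⟩ := Metric.mem_closure_iff.1
    (image_closure_subset_closure_image translate.continuous (Set.mem_image_of_mem _ hy))
    (ε / 2) (half_pos hε)
  have hshift := (hlim a).const_mul ‖F‖
  rw [mul_zero] at hshift
  filter_upwards [hne, hshift.eventually_lt_const (half_pos hε)] with i hi hi'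
  have hclose : |𝔼 q ∈ S i, F (y + φ q) - 𝔼 q ∈ S i, F (φ a + φ q)| ≤ ε / 2 := by
    rw [← expect_sub_distrib]
    exact (abs_expect_le ..).trans (expect_le hi fun q _ =>
      (ContinuousMap.dist_apply_le_dist (f := translate y) (φ q)).trans ha.le)
  have hinv := abs_expect_add_sub_expect_le (S i) a (H := fun q => F (φ q))
    fun q => F.norm_coe_le_norm (φ q)
  simp only [map_add] at hinv
  rw [Real.dist_0_eq_abs]
  linarith [abs_sub_le (𝔼 q ∈ S i, F (y + φ q)) (𝔼 q ∈ S i, F (φ a + φ q)) (𝔼 q ∈ S i, F (φ q))]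

variable [MeasurableSpace G] [BorelSpace G]

theorem tendsto_expect_integral [l.IsCountablyGenerated]
    (hS : IsAddFoelner A Measure.count l fun i => (S i : Set A)) (φ : A →+ G) {μ : Measure G}
    [IsProbabilityMeasure μ] (hsupp : ∀ᵐ y ∂μ, y ∈ closure (Set.range φ))
    (hinv : ∀ a, μ.map (· + φ a) = μ) (F : C(G, ℝ)) :
    Tendsto (fun i => 𝔼 q ∈ S i, F (φ q)) l (𝓝 (∫ y, F y ∂μ)) := by
  classical
  have hne := (isAddFoelner_count_iff.1 hS).1
  have hbound (i : ι) (hi : (S i).Nonempty) (ψ : A → G) : |𝔼 q ∈ S i, F (ψ q)| ≤ ‖F‖ :=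
    (abs_expect_le ..).trans (expect_le hi fun q _ => F.norm_coe_le_norm (ψ q))
  have hcont (i : ι) : Continuous fun y => 𝔼 q ∈ S i, F (y + φ q) := by
    simp only [expect_eq_sum_div_card]
    fun_prop
  have hdiff : Tendsto (fun i => ∫ y, 𝔼 q ∈ S i, F (y + φ q) - 𝔼 q ∈ S i, F (φ q) ∂μ) l (𝓝 0) := by
    rw [← integral_zero G ℝ (μ := μ)]
    refine tendsto_integral_filter_of_dominated_convergence (fun _ => ‖F‖ + ‖F‖)
      (.of_forall fun i => ((hcont i).sub continuous_const).aestronglyMeasurable) ?_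
      (integrable_const _) ?_
    · filter_upwards [hne] with i hi
      exact .of_forall fun y =>
        (abs_sub _ _).trans (add_le_add (hbound i hi (y + φ ·)) (hbound i hi φ))
    · filter_upwards [hsupp] with y hy
      exact tendsto_expect_add_sub_expect_of_mem_closure hS φ F hy
  have heq : ∀ᶠ i in l, ∫ y, F y ∂μ -
      ∫ y, 𝔼 q ∈ S i, F (y + φ q) - 𝔼 q ∈ S i, F (φ q) ∂μ = 𝔼 q ∈ S i, F (φ q) := by
    filter_upwards [hne] with i hi
    rw [integral_sub ((hcont i).integrable_of_hasCompactSupport (.of_compactSpace _))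
      (integrable_const _), integral_expect_add F hi hinv]
    simp
  simpa using (hdiff.const_sub _).congr' heq

end Averages
end Folner

/-! ### From continuous to measurable functions -/

section Approximation

open Filter
open scoped Topology

theorem exists_seq_continuous_tendsto_ae {X : Type*} [TopologicalSpace X] [NormalSpace X]
    [MeasurableSpace X] [BorelSpace X] {ν : Measure X} [ν.WeaklyRegular] {f : X → ℝ} {a b : ℝ}
    (hf : Integrable f ν) (hfab : ∀ x, f x ∈ Set.Icc a b) :
    ∃ g : ℕ → X → ℝ, (∀ n, Continuous (g n)) ∧ (∀ n x, g n x ∈ Set.Icc a b) ∧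
      ∀ᵐ x ∂ν, Tendsto (g · x) atTop (𝓝 (f x)) := by
  rcases isEmpty_or_nonempty X with hX | ⟨⟨x₀⟩⟩
  · exact ⟨0, fun _ => continuous_const, fun _ x => isEmptyElim x, .of_forall isEmptyElim⟩
  have hab : a ≤ b := (hfab x₀).1.trans (hfab x₀).2
  choose g hg hgint using fun n : ℕ =>
    (memLp_one_iff_integrable.2 hf).exists_boundedContinuous_eLpNorm_sub_le ENNReal.one_ne_top
      (ENNReal.inv_ne_zero.2 (ENNReal.natCast_ne_top n))
  have hlim : Tendsto (fun n => eLpNorm (⇑(g n) - f) 1 ν) atTop (𝓝 0) :=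
    tendsto_of_tendsto_of_tendsto_of_le_of_le tendsto_const_nhds
      ENNReal.tendsto_inv_nat_nhds_zero (fun _ => zero_le)
      fun n => (eLpNorm_sub_comm _ _ _ _).trans_le (hg n)
  obtain ⟨ns, -, hns⟩ := (tendstoInMeasure_of_tendsto_eLpNorm one_ne_zero
    (fun n => (hgint n).aestronglyMeasurable) hf.aestronglyMeasurable hlim).exists_seq_tendsto_ae
  refine ⟨fun n x => Set.projIcc a b hab (g (ns n) x), fun n => by fun_prop,
    fun n x => Subtype.coe_prop _, ?_⟩
  filter_upwards [hns] with x hx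
  have hproj : Continuous fun t => (Set.projIcc a b hab t : ℝ) := by fun_prop
  simpa only [Set.projIcc_of_mem hab (hfab x), Function.comp_def] using (hproj.tendsto _).comp hx

theorem tendsto_integral_prod_of_tendsto_ae {ι Y X : Type*} [Fintype ι] [MeasurableSpace Y]
    [MeasurableSpace X] {μ : Measure Y} [IsFiniteMeasure μ] {ν : Measure X} {p : ι → Y → X}
    (hp : ∀ i, Measure.QuasiMeasurePreserving (p i) μ ν) {g : ℕ → X → ℝ} {f : X → ℝ}
    (hg : ∀ n, Measurable (g n)) (hg01 : ∀ n x, g n x ∈ Set.Icc 0 1)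
    (hgf : ∀ᵐ x ∂ν, Tendsto (g · x) atTop (𝓝 (f x))) :
    Tendsto (fun n => ∫ y, ∏ i, g n (p i y) ∂μ) atTop (𝓝 (∫ y, ∏ i, f (p i y) ∂μ)) := by
  refine tendsto_integral_of_dominated_convergence (fun _ => 1)
    (fun n => (Finset.measurable_prod _ fun i _ => (hg n).comp
      (hp i).measurable).aestronglyMeasurable) (integrable_const 1) (fun n => ?_) ?_
  · refine .of_forall fun y => ?_
    rw [Real.norm_eq_abs, Finset.abs_prod]
    exact Finset.prod_le_one (fun i _ => abs_nonneg _) fun i _ =>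
      abs_le.2 ⟨by linarith [(hg01 n (p i y)).1], (hg01 n (p i y)).2⟩
  · filter_upwards [ae_all_iff.2 fun i => (hp i).ae hgf] with y hy
    exact tendsto_finsetProd _ fun i _ => hy i

theorem le_integral_prod_of_forall_continuous {ι Y X : Type*} [Fintype ι] [MeasurableSpace Y]
    {μ : Measure Y} [IsFiniteMeasure μ] [TopologicalSpace X] [NormalSpace X] [MeasurableSpace X]
    [BorelSpace X] {ν : Measure X} [ν.WeaklyRegular] [IsFiniteMeasure ν] {p : ι → Y → X}
    (hp : ∀ i, Measure.QuasiMeasurePreserving (p i) μ ν) {Φ : ℝ → ℝ} (hΦ : Continuous Φ)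
    (hle : ∀ g : X → ℝ, Continuous g → (∀ x, g x ∈ Set.Icc 0 1) →
      Φ (∫ x, g x ∂ν) ≤ ∫ y, ∏ i, g (p i y) ∂μ)
    {f : X → ℝ} (hf : Measurable f) (hf01 : ∀ x, f x ∈ Set.Icc 0 1) :
    Φ (∫ x, f x ∂ν) ≤ ∫ y, ∏ i, f (p i y) ∂μ := by
  obtain ⟨g, hgcont, hg01, hgf⟩ :=
    exists_seq_continuous_tendsto_ae (ν := ν)
      (.of_mem_Icc 0 1 hf.aemeasurable (.of_forall hf01)) hf01
  have hmeas (n : ℕ) : Measurable (g n) := (hgcont n).measurable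
  have hleft : Tendsto (fun n => ∫ x, g n x ∂ν) atTop (𝓝 (∫ x, f x ∂ν)) := by
    simpa using tendsto_integral_prod_of_tendsto_ae (ι := Unit)
      (fun _ => Measure.QuasiMeasurePreserving.id ν) hmeas hg01 hgf
  exact le_of_tendsto_of_tendsto' ((hΦ.tendsto _).comp hleft)
    (tendsto_integral_prod_of_tendsto_ae hp hmeas hg01 hgf)
    fun n => hle (g n) (hgcont n) (hg01 n)

end Approximation

section Marginals

theorem quasiMeasurePreserving_of_map_add_eq {H G : Type*} [AddGroup H] [MeasurableSpace H]
    [MeasurableAdd H] [AddGroup G] [TopologicalSpace G] [IsTopologicalAddGroup G] [CompactSpace G]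
    [MeasurableSpace G] [BorelSpace G] {μ : Measure H} [IsFiniteMeasure μ] {ν : Measure G}
    [ν.IsAddHaarMeasure] (π : H →+ G) (hπ : Measurable π)
    (hinv : ∀ z, ∃ h, π h = z ∧ μ.map (h + ·) = μ) :
    Measure.QuasiMeasurePreserving π μ ν := by
  have : (μ.map π).IsAddLeftInvariant := by
    refine ⟨fun z => ?_⟩
    obtain ⟨h, rfl, hh⟩ := hinv z
    rw [Measure.map_map (measurable_const_add _) hπ]
    conv_rhs => rw [← hh]
    rw [Measure.map_map hπ (measurable_const_add _)]
    congr 1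
    ext x
    simp
  refine ⟨hπ, ?_⟩
  rw [Measure.isAddInvariant_eq_smul_of_compactSpace (μ.map π) ν]
  exact Measure.smul_absolutelyContinuous

end Marginals

/-! ### Integer points of a rational subspace -/

section IntegerPoints

open Finset

variable {ι κ : Type*}

/-- The integer points of a rational subspace, as a lattice. -/
def integerPoints (V : Submodule ℚ (ι → ℚ)) : AddSubgroup (ι → ℤ) :=
  V.toAddSubgroup.comap ((Int.castAddHom ℚ).compLeft ι)

variable {V : Submodule ℚ (ι → ℚ)}

theorem mem_integerPoints {w : ι → ℤ} : w ∈ integerPoints V ↔ (fun i => (w i : ℚ)) ∈ V := Iff.rfl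

theorem one_mem_integerPoints (hV1 : (fun _ : ι => (1 : ℚ)) ∈ V) :
    (1 : ι → ℤ) ∈ integerPoints V := by
  simpa [mem_integerPoints] using hV1

theorem exists_intCast_eq_mul_of_mem [Finite ι] {v : ι → ℚ} (hv : v ∈ V) :
    ∃ b : ℤ, b ≠ 0 ∧ ∃ w ∈ integerPoints V, ∀ i, (w i : ℚ) = b * v i := by
  obtain ⟨b, hb⟩ := IsLocalization.exist_integer_multiples_of_finite (nonZeroDivisors ℤ) v
  choose w hw using hb
  replace hw (i : ι) : (w i : ℚ) = (b : ℤ) * v i := by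
    simpa only [eq_intCast, zsmul_eq_mul] using hw i
  refine ⟨b, nonZeroDivisors.ne_zero b.2, w, ?_, hw⟩
  rw [mem_integerPoints, funext hw]
  exact V.smul_mem ((b : ℤ) : ℚ) hv

/-- The translates of `α` by integer points of `V`, one for each index in `κ`. The output is
indexed by the coordinates of `V` first, so that it is a tuple of points of `κ → G`. -/
def orbitHom {G : Type*} [AddCommGroup G] (V : Submodule ℚ (ι → ℚ)) (κ : Type*) (α : G) :
    (κ → integerPoints V) →+ (ι → κ → G) where
  toFun q i j := (q j : ι → ℤ) i • α
  map_zero' := by ext; simp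
  map_add' q q' := by ext; simp [add_smul]

theorem closure_range_integerPoints_smul [Finite ι] {α : UnitAddCircle}
    (hα : DenseRange fun n : ℤ => n • α) :
    closure (Set.range fun w : integerPoints V => fun i => (w : ι → ℤ) i • α) =
      closure ((fun x : ι → ℚ => fun i => ((x i : ℝ) : UnitAddCircle)) '' V) := by
  refine (closure_minimal ?_ isClosed_closure).antisymm (closure_minimal ?_ isClosed_closure)
  · rintro _ ⟨w, rfl⟩
    obtain ⟨t, rfl⟩ := QuotientAddGroup.mk_surjective α
    have hcont : Continuous fun s : ℝ => fun i => (w : ι → ℤ) i • (s : UnitAddCircle) := by fun_prop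
    refine map_mem_closure hcont (Rat.denseRange_cast t) ?_
    rintro _ ⟨r, rfl⟩
    exact ⟨r • fun i => ((w : ι → ℤ) i : ℚ), V.smul_mem r w.2,
      by ext; simp [← AddCircle.coe_zsmul, mul_comm]⟩
  · rintro _ ⟨v, hv, rfl⟩
    obtain ⟨b, hb, w, hw, hwv⟩ := exists_intCast_eq_mul_of_mem hv
    have hvw : (fun i => ((v i : ℝ) : UnitAddCircle)) =
        fun i => w i • ((b⁻¹ : ℝ) : UnitAddCircle) := by
      ext i
      have : (w i : ℝ) = b * v i := mod_cast hwv i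
      rw [← AddCircle.coe_zsmul, zsmul_eq_mul, this, mul_right_comm, mul_inv_cancel₀ (mod_cast hb),
        one_mul]
    have hcont : Continuous fun z : UnitAddCircle => fun i => w i • z := by fun_prop
    beta_reduce
    rw [hvw]
    refine map_mem_closure hcont (hα _) ?_
    rintro _ ⟨n, rfl⟩
    exact ⟨n • ⟨w, hw⟩, by ext; simp [smul_smul, mul_comm]⟩

theorem closure_range_orbitHom {G : Type*} [AddCommGroup G] [TopologicalSpace G] (α : G) :
    closure (Set.range (orbitHom V κ α)) = {y | ∀ j, (fun i => y i j) ∈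
      closure (Set.range fun w : integerPoints V => fun i => (w : ι → ℤ) i • α)} := by
  let swap : (ι → κ → G) ≃ₜ (κ → ι → G) :=
    { Equiv.piComm fun _ _ => G with
      continuous_toFun := by simp only [Equiv.piComm]; fun_prop
      continuous_invFun := by simp only [Equiv.piComm]; fun_prop }
  have hrange : Set.range (orbitHom V κ α) = swap ⁻¹' Set.univ.pi fun _ =>
      Set.range fun w : integerPoints V => fun i => (w : ι → ℤ) i • α := by
    rw [← Set.range_piMap]
    exact (swap.preimage_image _).symm.trans (congrArg _ (Set.range_comp ..).symm)
  rw [hrange, ← swap.preimage_closure, closure_pi_set]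
  ext y
  simp [swap, Equiv.piComm]

theorem const_mem_closure_range_orbitHom {G : Type*} [AddCommGroup G] [TopologicalSpace G] {α : G}
    (hV1 : 1 ∈ integerPoints V) (hα : DenseRange fun n : ℤ => n • α) (z : κ → G) :
    (fun _ => z) ∈ closure (Set.range (orbitHom V κ α)) := by
  rw [closure_range_orbitHom]
  refine fun j => map_mem_closure (continuous_pi fun _ => continuous_id) (hα (z j)) ?_
  rintro _ ⟨n, rfl⟩
  exact ⟨n • ⟨1, hV1⟩, by ext; simp⟩

variable [Fintype ι] [DecidableEq ι]

theorem mem_Icc_zero_nsmul_one {n : ℕ} {w : ι → ℤ} :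
    w ∈ Icc 0 (n • 1) ↔ ∀ i, 0 ≤ w i ∧ w i ≤ n := by
  simp [Pi.le_def, forall_and]

theorem card_Icc_zero_nsmul_one (n : ℕ) :
    #(Icc (0 : ι → ℤ) (n • 1)) = (n + 1) ^ Fintype.card ι := by
  simp [Pi.card_Icc]

noncomputable instance integerPoints.instLocallyFiniteOrder :
    LocallyFiniteOrder (integerPoints V) := by
  classical exact inferInstanceAs (LocallyFiniteOrder {w : ι → ℤ // w ∈ integerPoints V})

theorem coe_mem_Icc_zero_nsmul_one {hV1 : 1 ∈ integerPoints V} {n : ℕ} {w : integerPoints V} :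
    (w : ι → ℤ) ∈ Icc 0 (n • 1) ↔ w ∈ Icc 0 (n • ⟨1, hV1⟩) := by
  rw [mem_Icc, mem_Icc]
  rfl

theorem card_Icc_zero_nsmul_integerPoints_le (hV1 : 1 ∈ integerPoints V) (n : ℕ) :
    #(Icc (0 : integerPoints V) (n • ⟨1, hV1⟩)) ≤ (n + 1) ^ Fintype.card ι := by
  rw [← card_Icc_zero_nsmul_one]
  exact card_le_card_of_injOn Subtype.val (fun _ hw => coe_mem_Icc_zero_nsmul_one.2 hw)
    Subtype.val_injective.injOn

end IntegerPoints

section Boxes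

open Finset
open scoped BigOperators

theorem bijOn_toNat_Icc {ι : Type*} [Fintype ι] [DecidableEq ι] (n : ℕ) :
    Set.BijOn (fun (w : ι → ℤ) i => (w i).toNat) ↑(Icc (0 : ι → ℤ) (n • 1))
      {x | ∀ i, x i < n + 1} := by
  refine ⟨fun w hw i => ?_, fun w hw w' hw' h => funext fun i => ?_,
    fun x hx => ⟨fun i => x i, mem_Icc_zero_nsmul_one.2 fun i =>
      ⟨by simp, Int.ofNat_le.2 (Nat.lt_succ_iff.1 (hx i))⟩, by simp⟩⟩
  · have := mem_Icc_zero_nsmul_one.1 hw i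
    lia
  · have := mem_Icc_zero_nsmul_one.1 hw i
    have := mem_Icc_zero_nsmul_one.1 hw' i
    have := congrFun h i
    lia

variable {d m : ℕ} {V : Submodule ℚ (Fin d → ℚ)}

theorem bijOn_toNat_Icc_integerPoints (hV1 : 1 ∈ integerPoints V) (n : ℕ) :
    Set.BijOn (fun (w : integerPoints V) i => ((w : Fin d → ℤ) i).toNat)
      ↑(Icc (0 : integerPoints V) (n • ⟨1, hV1⟩))
      {x | (∀ i, x i < n + 1) ∧ (fun i => (x i : ℚ)) ∈ V} := by
  have hbox := bijOn_toNat_Icc (ι := Fin d) n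
  refine ⟨fun w hw => ⟨hbox.mapsTo (coe_mem_Icc_zero_nsmul_one.2 hw), ?_⟩, fun w hw w' hw' h =>
    Subtype.ext (hbox.injOn (coe_mem_Icc_zero_nsmul_one.2 hw) (coe_mem_Icc_zero_nsmul_one.2 hw') h),
    fun x ⟨hxn, hxV⟩ => ?_⟩
  · have hcast (i : Fin d) : (((w : Fin d → ℤ) i).toNat : ℚ) = (w : Fin d → ℤ) i :=
      mod_cast Int.toNat_of_nonneg ((mem_Icc.1 hw).1 i)
    simpa only [hcast] using mem_integerPoints.1 w.2
  · exact ⟨⟨fun i => x i, by simpa [mem_integerPoints] using hxV⟩,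
      coe_mem_Icc_zero_nsmul_one.1 (mem_Icc_zero_nsmul_one.2 fun i =>
        ⟨by simp, Int.ofNat_le.2 (Nat.lt_succ_iff.1 (hxn i))⟩), by simp⟩

theorem bijOn_toNat_Icc_pi_integerPoints (hV1 : 1 ∈ integerPoints V) (n : ℕ) :
    Set.BijOn (fun (q : Fin m → integerPoints V) i j => ((q j : Fin d → ℤ) i).toNat)
      ↑(Icc (0 : Fin m → integerPoints V) (n • fun _ => ⟨1, hV1⟩))
      {q | (∀ i j, q i j < n + 1) ∧ inVm V q} := by
  have hcol := bijOn_toNat_Icc_integerPoints hV1 n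
  have hIcc (q : Fin m → integerPoints V) : q ∈ Icc 0 (n • fun _ : Fin m => ⟨1, hV1⟩) ↔
      ∀ j, q j ∈ Icc (0 : integerPoints V) (n • ⟨1, hV1⟩) := by
    simp [Pi.le_def, forall_and]
  refine ⟨fun q hq => ⟨fun i j => (hcol.mapsTo ((hIcc q).1 hq j)).1 i,
    fun j => (hcol.mapsTo ((hIcc q).1 hq j)).2⟩, fun q hq q' hq' h => funext fun j => ?_,
    fun x hx => ?_⟩
  · exact hcol.injOn ((hIcc q).1 hq j) ((hIcc q').1 hq' j)
      (funext fun i => congrFun (congrFun h i) j)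
  · choose w hw hwx using fun j => hcol.surjOn ⟨fun i => hx.1 i j, hx.2 j⟩
    exact ⟨w, (hIcc w).2 hw, funext fun i => funext fun j => congrFun (hwx j) i⟩

theorem solutionAvg_succ_eq_expect (hV1 : 1 ∈ integerPoints V) (n : ℕ)
    (H : (Fin m → ℤ) → ℝ) :
    solutionAvg V (n + 1) (fun a => H fun j => a j) =
      𝔼 q ∈ Icc (0 : Fin m → integerPoints V) (n • fun _ => ⟨1, hV1⟩),
        ∏ i, H fun j => (q j : Fin d → ℤ) i := by
  have hcard : VboxCard V (n + 1) = #(Icc (0 : integerPoints V) (n • ⟨1, hV1⟩)) := by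
    rw [VboxCard, ← (bijOn_toNat_Icc_integerPoints hV1 n).ncard_eq, Set.ncard_coe_finset]
  rw [solutionAvg, hcard, ← finsum_mem_eq_of_bijOn _ (bijOn_toNat_Icc_pi_integerPoints hV1 n)
    fun _ _ => rfl, finsum_mem_coe_finset, expect_eq_sum_div_card, Pi.card_Icc]
  congr 1
  · refine sum_congr rfl fun q hq => prod_congr rfl fun i _ => congrArg H (funext fun j => ?_)
    exact Int.toNat_of_nonneg ((mem_Icc.1 hq).1 j i)
  · simp

theorem l1NormBox_succ_eq_expect (n : ℕ) (H : (Fin m → ℤ) → ℝ) :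
    l1NormBox m (n + 1) (fun a => H fun j => a j) =
      𝔼 a ∈ Icc (0 : Fin m → ℤ) (n • 1), |H a| := by
  rw [l1NormBox, ← finsum_mem_eq_of_bijOn _ (bijOn_toNat_Icc n) fun _ _ => rfl,
    finsum_mem_coe_finset, expect_eq_sum_div_card, card_Icc_zero_nsmul_one, Fintype.card_fin]
  push_cast
  congr 1
  refine sum_congr rfl fun a ha => congrArg (fun x => |H x|) (funext fun j => ?_)
  exact Int.toNat_of_nonneg ((mem_Icc.1 ha).1 j)

end Boxes

section Limits

open Filter Finset
open scoped BigOperators Topology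

theorem tendsto_expect_Icc_integral {κ : Type*} [Fintype κ] [DecidableEq κ] {α : UnitAddCircle}
    (hα : DenseRange fun n : ℤ => n • α) (g : C(κ → UnitAddCircle, ℝ)) :
    Tendsto (fun n : ℕ => 𝔼 a ∈ Icc (0 : κ → ℤ) (n • 1), g fun j => a j • α) atTop
      (𝓝 (∫ x, g x)) := by
  have : IsProbabilityMeasure (volume : Measure UnitAddCircle) :=
    ⟨by simp [AddCircle.measure_univ]⟩
  have hratio (s : ℕ) : Tendsto (fun n : ℕ =>
      (#(Icc (0 : κ → ℤ) ((n + s) • 1)) : ℝ) / #(Icc (0 : κ → ℤ) (n • 1))) atTop (𝓝 1) := by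
    have hlim := (tendsto_one_div_add_atTop_nhds_zero_nat (𝕜 := ℝ)).const_mul (s : ℝ)
    replace hlim := (hlim.const_add 1).pow (Fintype.card κ)
    rw [mul_zero, add_zero, one_pow] at hlim
    refine hlim.congr fun n => ?_
    rw [card_Icc_zero_nsmul_one, card_Icc_zero_nsmul_one]
    push_cast
    rw [← div_pow]
    field_simp
    ring
  refine tendsto_expect_integral
    (isAddFoelner_Icc_zero_nsmul (.pi fun _ => .int_one) hratio)
    ((zmultiplesHom _ α).compLeft κ) (.of_forall ?_) (fun a => ?_) g
  · exact DenseRange.piMap fun _ => hα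
  · exact (measurePreserving_add_right _ _).map_eq

variable {d m : ℕ} {V : Submodule ℚ (Fin d → ℚ)} {α : UnitAddCircle}
  {μ : Measure (Fin d → Fin m → UnitAddCircle)} [IsProbabilityMeasure μ]

theorem exists_filter_tendsto_solutionAvg (hV1 : 1 ∈ integerPoints V)
    (hsupp : ∀ᵐ y ∂μ, y ∈ closure (Set.range (orbitHom V (Fin m) α)))
    (hinv : ∀ q, μ.map (· + orbitHom V (Fin m) α q) = μ) :
    ∃ l : Filter ℕ, l ≤ atTop ∧ l.NeBot ∧ ∀ g : C(Fin m → UnitAddCircle, ℝ),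
      Tendsto (fun n => solutionAvg V (n + 1) fun a => g fun j => (a j : ℤ) • α) l
        (𝓝 (∫ y, ∏ i, g (y i) ∂μ)) := by
  have hunit : IsOrderUnit fun _ : Fin m => (⟨1, hV1⟩ : integerPoints V) :=
    .pi fun _ => .addSubgroup (.pi fun _ => .int_one) hV1
  have hgrowth (n : ℕ) : #(Icc (0 : Fin m → integerPoints V) (n • fun _ => ⟨1, hV1⟩)) ≤
      (n + 1) ^ (d * m) := by
    rw [Pi.card_Icc, pow_mul]
    simpa using Nat.pow_le_pow_left (card_Icc_zero_nsmul_integerPoints_le hV1 n) m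
  have : BorelSpace (Fin d → Fin m → UnitAddCircle) := Pi.borelSpace
  obtain ⟨l, hl, hne, hgen, hS⟩ := exists_filter_isAddFoelner_Icc_zero_nsmul hunit hgrowth
  refine ⟨l, hl, hne, fun g => ?_⟩
  simp only [solutionAvg_succ_eq_expect hV1 _ fun x => g fun j => x j • α]
  exact tendsto_expect_integral hS (orbitHom V (Fin m) α) hsupp hinv
    ⟨fun y => ∏ i, g (y i), by fun_prop⟩

theorem le_integral_prod_of_continuous (hV1 : 1 ∈ integerPoints V)
    (hα : DenseRange fun n : ℤ => n • α)
    (hsupp : ∀ᵐ y ∂μ, y ∈ closure (Set.range (orbitHom V (Fin m) α)))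
    (hinv : ∀ q, μ.map (· + orbitHom V (Fin m) α q) = μ) {Φ : ℝ → ℝ} (hΦ : Continuous Φ) {N₀ : ℕ}
    (hle : ∀ N ≥ N₀, ∀ c : (Fin m → ℕ) → ℝ, (∀ a, c a ∈ Set.Icc 0 1) →
      Φ (l1NormBox m N c) ≤ solutionAvg V N c)
    {g : (Fin m → UnitAddCircle) → ℝ} (hg : Continuous g) (hg01 : ∀ x, g x ∈ Set.Icc 0 1) :
    Φ (∫ x, g x) ≤ ∫ y, ∏ i, g (y i) ∂μ := by
  obtain ⟨l, hl, hne, hlim⟩ := exists_filter_tendsto_solutionAvg hV1 hsupp hinv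
  have hl1 : Tendsto (fun n => l1NormBox m (n + 1) fun a => g fun j => (a j : ℤ) • α) l
      (𝓝 (∫ x, g x)) := by
    simpa only [l1NormBox_succ_eq_expect _ fun x => g fun j => x j • α, abs_of_nonneg (hg01 _).1,
      ContinuousMap.coe_mk] using (tendsto_expect_Icc_integral hα ⟨g, hg⟩).mono_left hl
  refine le_of_tendsto_of_tendsto ((hΦ.tendsto _).comp hl1) (hlim ⟨g, hg⟩) ?_
  filter_upwards [hl (eventually_ge_atTop N₀)] with n hn
  exact hle (n + 1) (by omega) _ fun a => hg01 _

theorem quasiMeasurePreserving_eval_of_orbitHom_invariant (hV1 : 1 ∈ integerPoints V)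
    (hα : DenseRange fun n : ℤ => n • α)
    (hinv : ∀ y ∈ closure (Set.range (orbitHom V (Fin m) α)), μ.map (· + y) = μ) (i : Fin d) :
    Measure.QuasiMeasurePreserving (fun y => y i) μ volume :=
  quasiMeasurePreserving_of_map_add_eq (Pi.evalAddMonoidHom (fun _ => Fin m → UnitAddCircle) i)
    (measurable_pi_apply i) fun z =>
    ⟨fun _ => z, rfl, by
      simpa only [add_comm] using hinv _ (const_mem_closure_range_orbitHom hV1 hα z)⟩

end Limits

theorem equivalent_inequalities_three_implies_four_general
    {m d : ℕ} {Φ : ℝ → ℝ} (hΦ : Continuous Φ) {V : Submodule ℚ (Fin d → ℚ)}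
    (hV1 : (fun _ : Fin d => (1 : ℚ)) ∈ V) {N₀ : ℕ}
    (hyp : ∀ N ≥ N₀, ∀ c : (Fin m → ℕ) → ℝ, (∀ a, c a ∈ Set.Icc 0 1) →
      Φ (l1NormBox m N c) ≤ solutionAvg V N c)
    {Vbar : Set (Fin d → ℝ)}
    (hVbar : Vbar = closure ((fun x : Fin d → ℚ => fun i => (x i : ℝ)) '' V))
    {Ytor : Set (Fin d → UnitAddCircle)}
    (hY : Ytor = closure ((fun x : Fin d → ℝ => fun i => (x i : UnitAddCircle)) '' Vbar))
    {μY : Measure (Fin d → Fin m → UnitAddCircle)} [IsProbabilityMeasure μY]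
    (hsupp : μY {y | ∀ j, (fun i => y i j) ∈ Ytor} = 1)
    (hinv : ∀ g : Fin d → Fin m → UnitAddCircle, (∀ j, (fun i => g i j) ∈ Ytor) →
      μY.map (fun y => y + g) = μY)
    {f : (Fin m → UnitAddCircle) → ℝ} (hf : Measurable f) (hf01 : ∀ x, f x ∈ Set.Icc 0 1) :
    Φ (∫ x, f x) ≤ ∫ y, ∏ i, f (y i) ∂μY := by
  obtain ⟨α, hα⟩ : ∃ α : UnitAddCircle, DenseRange fun n : ℤ => n • α :=
    ⟨(√2 : ℝ), AddCircle.denseRange_zsmul_coe_iff.2 (by simpa using irrational_sqrt_two)⟩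
  have hone := one_mem_integerPoints hV1
  have hYorbit : closure (Set.range (orbitHom V (Fin m) α)) =
      {y | ∀ j, (fun i => y i j) ∈ Ytor} := by
    rw [closure_range_orbitHom, closure_range_integerPoints_smul hα, hY, hVbar,
      closure_image_closure (by fun_prop), Set.image_image]
  have hinv' : ∀ y ∈ closure (Set.range (orbitHom V (Fin m) α)), μY.map (· + y) = μY := by
    rw [hYorbit]
    exact hinv
  have hsupp' : ∀ᵐ y ∂μY, y ∈ closure (Set.range (orbitHom V (Fin m) α)) := by
    have : BorelSpace (Fin d → Fin m → UnitAddCircle) := Pi.borelSpace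
    rw [← hYorbit] at hsupp
    exact (mem_ae_iff_prob_eq_one isClosed_closure.measurableSet).2 hsupp
  exact le_integral_prod_of_forall_continuous
    (quasiMeasurePreserving_eval_of_orbitHom_invariant hone hα hinv') hΦ
    (fun g hg hg01 => le_integral_prod_of_continuous hone hα hsupp'
      (fun q => hinv' _ (subset_closure ⟨q, rfl⟩)) hΦ hyp hg hg01) hf hf01

theorem equivalent_inequalities_three_implies_four
    (m d ℓ : ℕ) (hdℓ : d < ℓ) (C : ℝ) (hC : 0 < C)
    (V : Submodule ℚ (Fin d → ℚ)) (hV1 : (fun _ : Fin d => (1 : ℚ)) ∈ V)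
    (N₀ : ℕ)
    (hyp : ∀ N ≥ N₀, ∀ c : (Fin m → ℕ) → ℝ, (∀ a, c a ∈ Set.Icc (0 : ℝ) 1) →
      solutionAvg V N c ≥ C * (1 - (d : ℝ) / ℓ) ^ ℓ * l1NormBox m N c ^ ℓ)
    (Vbar : Set (Fin d → ℝ))
    (hVbar : Vbar = closure ((fun x : Fin d → ℚ => fun i => ((x i : ℚ) : ℝ)) '' (V : Set (Fin d → ℚ))))
    (Ytor : Set (Fin d → AddCircle (1 : ℝ)))
    (hY : Ytor = closure ((fun x : Fin d → ℝ => fun i => ((x i : ℝ) : AddCircle (1 : ℝ))) '' Vbar))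
    (μY : Measure (Fin d → Fin m → AddCircle (1 : ℝ)))
    (hprob : IsProbabilityMeasure μY)
    (hsupp : μY {y : Fin d → Fin m → AddCircle (1 : ℝ) | ∀ j, (fun i => y i j) ∈ Ytor} = 1)
    (hinv : ∀ g : Fin d → Fin m → AddCircle (1 : ℝ), (∀ j, (fun i => g i j) ∈ Ytor) →
      Measure.map (fun y => y + g) μY = μY)
    (f : (Fin m → AddCircle (1 : ℝ)) → ℝ) (hf : Measurable f)
    (hf01 : ∀ x, f x ∈ Set.Icc (0 : ℝ) 1) :
    (∫ y, ∏ i : Fin d, f (y i) ∂μY) ≥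
      C * (1 - (d : ℝ) / ℓ) ^ ℓ * (∫ x, f x) ^ ℓ :=
  equivalent_inequalities_three_implies_four_general
    (Φ := fun x => C * (1 - (d : ℝ) / ℓ) ^ ℓ * x ^ ℓ) (by fun_prop) hV1 hyp hVbar hY hsupp hinv hf
    hf01
end

section
/- Let S ⊆ ℕ be a finite-rank Bohr₀ set, let α ∈ ℝ^m be such that 1, α₁, …, α_m are linearly independent over ℚ, and let I ⊆ 𝕋^m be a cube (a product of m intervals). Then lim_{N−M→∞} |{n ∈ S ∩ [M, N) : n²α mod ℤ^m ∈ I}| / |S ∩ [M, N)| = μ_{𝕋^m}(I), where μ_{𝕋^m} is the Haar probability measure on 𝕋^m; that is, for every ε > 0 there exists L such that for all M < N with N − M > L, the set S ∩ [M, N) is nonempty and the displayed ratio differs from μ_{𝕋^m}(I) by less than ε. -/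
open MeasureTheory

/-- A finite-rank Bohr₀ set: `{n : ℕ | ‖nβ‖ < δ}` for some `β` in a finite-dimensional torus. -/
def IsFiniteRankBohr0 (S : Set ℕ) : Prop :=
  ∃ (r : ℕ) (β : Fin r → AddCircle (1 : ℝ)) (δ : ℝ), 0 < δ ∧
    S = {n : ℕ | ∀ j, ‖n • β j‖ < δ}

/-!
Let `a ∈ 𝕋^m` be the image of `α` and let `K` be the closure of the subgroup generated by `β`.
By Weyl's criterion the points `(n²a, nβ)` equidistribute in `𝕋^m × K` along any Følner net of
windows: a character of `𝕋^m × K` takes the values `e(n²γ + nθ)` on them. If the character is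
nontrivial on `𝕋^m`, then `γ` has infinite order and van der Corput's trick reduces the quadratic
phase to a geometric sum; otherwise `γ = 0` and the sum is already geometric.

Now `S` is the set of times at which `nβ` visits the open set `U = {y ∈ K | ‖y‖ < δ}`. It has
positive Haar measure, and its frontier is null since each coordinate maps `K` either to a finite
set or onto the whole circle. So the frequencies of `S` and of `{n ∈ S | n²a ∈ I}` converge to
`ν U` and `μ I * ν U`, and their ratio to `μ I`.
-/

open Asymptotics Filter Topology
open scoped symmDiff

/-- A Følner net of finite windows in `ℕ`: nonempty finite sets along which a shift by one changes
only a negligible proportion of the elements. -/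
structure IsFolner {ι : Type*} (F : ι → Finset ℕ) (l : Filter ι) : Prop where
  nonempty : ∀ i, (F i).Nonempty
  isLittleO_symmDiff :
    (fun i ↦ ((F i ∆ (F i).map (addRightEmbedding 1)).card : ℝ)) =o[l] fun i ↦ ((F i).card : ℝ)

theorem isFolner_Ico :
    IsFolner (fun p : ℕ × ℕ ↦ Finset.Ico p.2 (p.2 + p.1 + 1)) (comap Prod.fst atTop) where
  nonempty p := by simp
  isLittleO_symmDiff := by
    have hbound (p : ℕ × ℕ) : (Finset.Ico p.2 (p.2 + p.1 + 1) ∆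
        (Finset.Ico p.2 (p.2 + p.1 + 1)).map (addRightEmbedding 1)).card ≤ 2 := by
      refine (Finset.card_le_card fun n hn ↦ ?_).trans
        (Finset.card_le_two (a := p.2) (b := p.2 + p.1 + 1))
      rw [Finset.map_add_right_Ico] at hn
      simp only [Finset.mem_symmDiff, Finset.mem_Ico,
        Finset.mem_insert, Finset.mem_singleton] at hn ⊢
      lia
    refine (IsBigO.of_bound 2 (.of_forall fun p ↦ ?_)).trans_isLittleO
      ((isLittleO_const_left (c := (1 : ℝ))).2 (Or.inr ?_))
    · rw [norm_one, mul_one, Real.norm_natCast]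
      exact_mod_cast hbound p
    · suffices Tendsto (fun p : ℕ × ℕ ↦ ((p.1 + 1 : ℕ) : ℝ)) (comap Prod.fst atTop) atTop by
        simpa [Function.comp_def, add_assoc] using tendsto_abs_atTop_atTop.comp this
      exact tendsto_natCast_atTop_atTop.comp ((tendsto_add_atTop_nat 1).comp tendsto_comap)

theorem norm_sum_sq_le_card_mul_sum_norm_sq {E κ : Type*} [SeminormedAddCommGroup E]
    (s : Finset κ) (v : κ → E) : ‖∑ h ∈ s, v h‖ ^ 2 ≤ s.card * ∑ h ∈ s, ‖v h‖ ^ 2 :=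
  (pow_le_pow_left₀ (norm_nonneg _) (norm_sum_le s v) 2).trans sq_sum_le_card_mul_sum_sq

theorem sum_offDiag_inner {𝕜 E κ : Type*} [RCLike 𝕜] [NormedAddCommGroup E]
    [InnerProductSpace 𝕜 E] (s : Finset κ) (v : κ → E) :
    ∑ q ∈ s.offDiag, inner 𝕜 (v q.1) (v q.2) =
      (‖∑ h ∈ s, v h‖ : 𝕜) ^ 2 - ∑ h ∈ s, (‖v h‖ : 𝕜) ^ 2 := by
  classical
  simp only [← inner_self_eq_norm_sq_to_K (𝕜 := 𝕜), sum_inner, inner_sum]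
  rw [← Finset.sum_product_right', ← Finset.sum_diag s fun q ↦ inner 𝕜 (v q.1) (v q.2),
    eq_sub_iff_add_eq', ← Finset.sum_union (Finset.disjoint_diag_offDiag s),
    Finset.diag_union_offDiag]

namespace IsFolner

variable {ι : Type*} {F : ι → Finset ℕ} {l : Filter ι}

section Normed

variable {E : Type*} [SeminormedAddCommGroup E] {a : ℕ → E} {C : ℝ}

theorem isLittleO_sum_add_one_sub (hF : IsFolner F l) (ha : ∀ n, ‖a n‖ ≤ C) :
    (fun i ↦ ∑ n ∈ F i, a (n + 1) - ∑ n ∈ F i, a n) =o[l] fun i ↦ ((F i).card : ℝ) := by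
  refine (IsBigO.of_bound C (.of_forall fun i ↦ ?_)).trans_isLittleO hF.isLittleO_symmDiff
  set G := (F i).map (addRightEmbedding 1) with hG
  have hsum (s : Finset ℕ) : ‖∑ n ∈ s, a n‖ ≤ s.card * C := by
    simpa using norm_sum_le_of_le s fun n _ ↦ ha n
  calc ‖∑ n ∈ F i, a (n + 1) - ∑ n ∈ F i, a n‖
      = ‖∑ n ∈ G \ F i, a n - ∑ n ∈ F i \ G, a n‖ := by
        rw [Finset.sum_sdiff_sub_sum_sdiff, hG, Finset.sum_map]; rfl
    _ ≤ (G \ F i).card * C + (F i \ G).card * C :=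
        (norm_sub_le _ _).trans (add_le_add (hsum _) (hsum _))
    _ = C * ‖((F i ∆ G).card : ℝ)‖ := by
        rw [Real.norm_natCast, symmDiff_def, Finset.sup_eq_union,
          Finset.card_union_of_disjoint disjoint_sdiff_sdiff, Nat.cast_add]
        ring

theorem isLittleO_sum_add_sub (hF : IsFolner F l) (ha : ∀ n, ‖a n‖ ≤ C) (h : ℕ) :
    (fun i ↦ ∑ n ∈ F i, a (n + h) - ∑ n ∈ F i, a n) =o[l] fun i ↦ ((F i).card : ℝ) := by
  induction h with
  | zero => simpa using isLittleO_zero _ _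
  | succ h ih =>
    have hstep := hF.isLittleO_sum_add_one_sub (a := fun n ↦ a (n + h)) fun n ↦ ha _
    exact (hstep.add ih).congr_left fun i ↦ by simp [add_right_comm _ 1 h, add_assoc]

theorem isLittleO_sum_add_iff (hF : IsFolner F l) (ha : ∀ n, ‖a n‖ ≤ C) (h : ℕ) :
    ((fun i ↦ ∑ n ∈ F i, a (n + h)) =o[l] fun i ↦ ((F i).card : ℝ)) ↔
      (fun i ↦ ∑ n ∈ F i, a n) =o[l] fun i ↦ ((F i).card : ℝ) := by
  have hsub := hF.isLittleO_sum_add_sub ha h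
  exact ⟨fun hs ↦ (hs.sub hsub).congr_left fun i ↦ sub_sub_cancel _ _,
    fun hs ↦ (hsub.add hs).congr_left fun i ↦ sub_add_cancel _ _⟩

theorem isLittleO_sum_sum_range_add_sub (hF : IsFolner F l)
    (ha : ∀ n, ‖a n‖ ≤ C) (D : ℕ) :
    (fun i ↦ ∑ n ∈ F i, ∑ h ∈ Finset.range D, a (n + h) - D • ∑ n ∈ F i, a n) =o[l]
      fun i ↦ ((F i).card : ℝ) := by
  refine (IsLittleO.sum (s := Finset.range D) fun h _ ↦ hF.isLittleO_sum_add_sub ha h).congr_left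
    fun i ↦ ?_
  simp only [Finset.sum_apply, Finset.sum_sub_distrib, Finset.sum_const, Finset.card_range]
  rw [Finset.sum_comm]

end Normed

section VanDerCorput

variable {𝕜 E : Type*} [RCLike 𝕜] [NormedAddCommGroup E] [InnerProductSpace 𝕜 E]
  {a : ℕ → E} {C : ℝ}

theorem isLittleO_sum_inner_of_ne (hF : IsFolner F l) (ha : ∀ n, ‖a n‖ ≤ C)
    (hcorr : ∀ h ≠ 0, (fun i ↦ ∑ n ∈ F i, inner 𝕜 (a (n + h)) (a n)) =o[l]
      fun i ↦ ((F i).card : ℝ)) {j k : ℕ} (hjk : j ≠ k) :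
    (fun i ↦ ∑ n ∈ F i, inner 𝕜 (a (n + j)) (a (n + k))) =o[l] fun i ↦ ((F i).card : ℝ) := by
  wlog hkj : k < j generalizing j k
  · refine (this hjk.symm (by lia)).norm_left.congr_left (fun i ↦ ?_) |>.of_norm_left
    rw [← RCLike.norm_conj, map_sum]
    simp only [inner_conj_symm]
  obtain ⟨h, rfl⟩ := Nat.exists_eq_add_of_lt hkj
  have hbound (n : ℕ) : ‖inner 𝕜 (a (n + (h + 1))) (a n)‖ ≤ C * C :=
    (norm_inner_le_norm _ _).trans (by gcongr <;> grind [norm_nonneg (a n)])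
  have := (hF.isLittleO_sum_add_iff hbound k).2 (hcorr _ h.succ_ne_zero)
  exact this.congr_left fun i ↦ Finset.sum_congr rfl fun n _ ↦ by simp only [add_assoc]

theorem isLittleO_sum_norm_sq_sum_range_sub (hF : IsFolner F l) (ha : ∀ n, ‖a n‖ ≤ C)
    (hcorr : ∀ h ≠ 0, (fun i ↦ ∑ n ∈ F i, inner 𝕜 (a (n + h)) (a n)) =o[l]
      fun i ↦ ((F i).card : ℝ)) (D : ℕ) :
    (fun i ↦ ∑ n ∈ F i, (‖∑ h ∈ Finset.range D, a (n + h)‖ ^ 2 -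
      ∑ h ∈ Finset.range D, ‖a (n + h)‖ ^ 2)) =o[l] fun i ↦ ((F i).card : ℝ) := by
  have hoff := IsLittleO.sum (s := (Finset.range D).offDiag) fun q hq ↦
    hF.isLittleO_sum_inner_of_ne ha hcorr (Finset.mem_offDiag.1 hq).2.2
  refine (hoff.norm_left.congr_left fun i ↦ ?_).of_norm_left
  rw [Real.norm_eq_abs, ← RCLike.norm_ofReal (K := 𝕜), Finset.sum_apply, Finset.sum_comm]
  simp only [← sum_offDiag_inner, RCLike.ofReal_sum, RCLike.ofReal_sub, RCLike.ofReal_pow]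

theorem eventually_sum_norm_sq_sum_range_le (hF : IsFolner F l) (ha : ∀ n, ‖a n‖ ≤ C)
    (hcorr : ∀ h ≠ 0, (fun i ↦ ∑ n ∈ F i, inner 𝕜 (a (n + h)) (a n)) =o[l]
      fun i ↦ ((F i).card : ℝ)) {D : ℕ} (hD : 1 ≤ D) :
    ∀ᶠ i in l, ∑ n ∈ F i, ‖∑ h ∈ Finset.range D, a (n + h)‖ ^ 2 ≤
      D * (C ^ 2 + 1) * (F i).card := by
  have hdiag (n : ℕ) : ∑ h ∈ Finset.range D, ‖a (n + h)‖ ^ 2 ≤ D * C ^ 2 := by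
    simpa using Finset.sum_le_sum fun h (_ : h ∈ Finset.range D) ↦
      pow_le_pow_left₀ (norm_nonneg _) (ha (n + h)) 2
  filter_upwards [(hF.isLittleO_sum_norm_sq_sum_range_sub ha hcorr D).bound one_pos] with i hoff
  calc ∑ n ∈ F i, ‖∑ h ∈ Finset.range D, a (n + h)‖ ^ 2
      = ∑ n ∈ F i, (‖∑ h ∈ Finset.range D, a (n + h)‖ ^ 2 -
            ∑ h ∈ Finset.range D, ‖a (n + h)‖ ^ 2) +
          ∑ n ∈ F i, ∑ h ∈ Finset.range D, ‖a (n + h)‖ ^ 2 := by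
        rw [← Finset.sum_add_distrib]
        simp only [sub_add_cancel]
    _ ≤ (F i).card + (F i).card * (D * C ^ 2) := by
        gcongr
        · simpa using (le_abs_self _).trans hoff
        · simpa using Finset.sum_le_sum fun n (_ : n ∈ F i) ↦ hdiag n
    _ ≤ D * (F i).card + (F i).card * (D * C ^ 2) := by
        gcongr
        exact le_mul_of_one_le_left (Nat.cast_nonneg _) (mod_cast hD)
    _ = D * (C ^ 2 + 1) * (F i).card := by ring

/-- van der Corput's trick: up to `o(|F i|)`, the sum of `a` is that of its averages over `D`
consecutive terms. Expanding the squares of these averages, only the diagonal survives, so they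
have mean square `O(1 / D)`. -/
theorem isLittleO_sum_of_inner (hF : IsFolner F l) (ha : ∀ n, ‖a n‖ ≤ C)
    (hcorr : ∀ h ≠ 0, (fun i ↦ ∑ n ∈ F i, inner 𝕜 (a (n + h)) (a n)) =o[l]
      fun i ↦ ((F i).card : ℝ)) :
    (fun i ↦ ∑ n ∈ F i, a n) =o[l] fun i ↦ ((F i).card : ℝ) := by
  refine isLittleO_iff.2 fun ε hε ↦ ?_
  obtain ⟨D, hD⟩ := exists_nat_gt (4 * (C ^ 2 + 1) / ε ^ 2)
  have hD₀ : (0 : ℝ) < D := lt_of_le_of_lt (by positivity) hD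
  have hD₁ : 1 ≤ D := Nat.cast_pos.1 hD₀
  filter_upwards [(hF.isLittleO_sum_sum_range_add_sub ha D).bound (half_pos hε),
    hF.eventually_sum_norm_sq_sum_range_le ha hcorr hD₁] with i hshift hsq
  set B : ℕ → E := fun n ↦ ∑ h ∈ Finset.range D, a (n + h)
  have hB : ‖∑ n ∈ F i, B n‖ ≤ D * (ε / 2) * (F i).card := by
    refine abs_le_of_sq_le_sq' ?_ (by positivity) |>.2
    calc ‖∑ n ∈ F i, B n‖ ^ 2 ≤ (F i).card * ∑ n ∈ F i, ‖B n‖ ^ 2 :=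
          norm_sum_sq_le_card_mul_sum_norm_sq _ _
      _ ≤ (F i).card * (D * (C ^ 2 + 1) * (F i).card) := by gcongr
      _ ≤ (F i).card * (D * (D * (ε / 2) ^ 2) * (F i).card) := by
        gcongr
        rw [div_lt_iff₀ (by positivity)] at hD
        linarith
      _ = (D * (ε / 2) * (F i).card) ^ 2 := by ring
  have hDa : D * ‖∑ n ∈ F i, a n‖ ≤ D * (ε * (F i).card) := by
    calc D * ‖∑ n ∈ F i, a n‖
        = ‖∑ n ∈ F i, B n - (∑ n ∈ F i, B n - D • ∑ n ∈ F i, a n)‖ := by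
          rw [sub_sub_cancel, RCLike.norm_nsmul 𝕜, nsmul_eq_mul]
      _ ≤ D * (ε / 2) * (F i).card + ε / 2 * (F i).card :=
        (norm_sub_le _ _).trans (add_le_add hB (by simpa using hshift))
      _ ≤ D * (ε / 2) * (F i).card + D * (ε / 2) * (F i).card := by
        gcongr
        exact le_mul_of_one_le_left (half_pos hε).le (mod_cast hD₁)
      _ = D * (ε * (F i).card) := by ring
  simpa using le_of_mul_le_mul_left hDa hD₀

end VanDerCorput

section Exponentials

theorem isLittleO_sum_pow (hF : IsFolner F l) {𝕜 : Type*} [NormedField 𝕜] {z : 𝕜}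
    (hz : ‖z‖ = 1) (hz₁ : z ≠ 1) :
    (fun i ↦ ∑ n ∈ F i, z ^ n) =o[l] fun i ↦ ((F i).card : ℝ) := by
  have hshift := hF.isLittleO_sum_add_one_sub (a := (z ^ ·)) (C := 1) (by simp [hz])
  refine (isLittleO_const_mul_left_iff (sub_ne_zero.2 hz₁)).1 (hshift.congr_left fun i ↦ ?_)
  simp only [pow_succ', ← Finset.mul_sum, sub_mul, one_mul]

theorem isLittleO_sum_toCircle_nsmul (hF : IsFolner F l) {T : ℝ} (hT : T ≠ 0) {θ : AddCircle T}
    (hθ : θ ≠ 0) :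
    (fun i ↦ ∑ n ∈ F i, ((n • θ).toCircle : ℂ)) =o[l] fun i ↦ ((F i).card : ℝ) := by
  simp only [AddCircle.toCircle_nsmul, Circle.coe_pow]
  refine hF.isLittleO_sum_pow (Circle.norm_coe _) (Circle.coe_eq_one.not.2 ?_)
  rwa [← AddCircle.toCircle_zero, (AddCircle.injective_toCircle hT).eq_iff]

theorem isLittleO_sum_toCircle_sq_nsmul_add (hF : IsFolner F l) {T : ℝ} (hT : T ≠ 0)
    {γ : AddCircle T} (hγ : ¬IsOfFinAddOrder γ) (θ : AddCircle T) :
    (fun i ↦ ∑ n ∈ F i, ((n ^ 2 • γ + n • θ).toCircle : ℂ)) =o[l]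
      fun i ↦ ((F i).card : ℝ) := by
  refine hF.isLittleO_sum_of_inner (𝕜 := ℂ) (fun n ↦ (Circle.norm_coe _).le) fun h hh ↦ ?_
  have hθ : -((2 * h) • γ) ≠ 0 := neg_ne_zero.2 fun h0 ↦
    hγ (isOfFinAddOrder_iff_nsmul_eq_zero.2 ⟨2 * h, by lia, h0⟩)
  refine ((hF.isLittleO_sum_toCircle_nsmul hT hθ).const_mul_left
    ((-(h ^ 2 • γ + h • θ)).toCircle : ℂ)).congr_left fun i ↦ ?_
  rw [Finset.mul_sum]
  refine Finset.sum_congr rfl fun n _ ↦ ?_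
  rw [RCLike.inner_apply', ← Circle.coe_inv_eq_conj, ← AddCircle.toCircle_neg, ← Circle.coe_mul,
    ← Circle.coe_mul, ← AddCircle.toCircle_add, ← AddCircle.toCircle_add]
  congr 2
  module

end Exponentials

end IsFolner

section WeakConvergence

variable {X ι : Type*} [TopologicalSpace X] [CompactSpace X] [MeasurableSpace X]
  [OpensMeasurableSpace X] {l : Filter ι} {ν : ι → ProbabilityMeasure X} {μ : ProbabilityMeasure X}

theorem lipschitzWith_integral_continuousMap (μ : Measure X) [IsProbabilityMeasure μ] :
    LipschitzWith 1 fun f : C(X, ℂ) ↦ ∫ y, f y ∂μ := by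
  have hint (f : C(X, ℂ)) : Integrable f μ :=
    f.continuous.integrable_of_hasCompactSupport (.of_compactSpace f)
  refine .of_dist_le_mul fun f g ↦ ?_
  rw [dist_eq_norm, ← integral_sub (hint f) (hint g)]
  simpa using norm_integral_le_of_norm_le_const (μ := μ) (.of_forall fun y ↦
    (dist_eq_norm (f y) (g y)).ge.trans (ContinuousMap.dist_apply_le_dist y))

theorem tendsto_probabilityMeasure_of_span_dense {s : Set C(X, ℂ)}
    (hs : (Submodule.span ℂ s).topologicalClosure = ⊤)
    (h : ∀ f ∈ s, Tendsto (fun i ↦ ∫ y, f y ∂(ν i : Measure X)) l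
      (𝓝 (∫ y, f y ∂(μ : Measure X)))) :
    Tendsto ν l (𝓝 μ) := by
  have hspan : ∀ f ∈ Submodule.span ℂ s,
      Tendsto (fun i ↦ ∫ y, f y ∂(ν i : Measure X)) l (𝓝 (∫ y, f y ∂(μ : Measure X))) := by
    have hint (ρ : ProbabilityMeasure X) (f : C(X, ℂ)) : Integrable f (ρ : Measure X) :=
      f.continuous.integrable_of_hasCompactSupport (.of_compactSpace f)
    intro f hf
    induction hf using Submodule.span_induction with
    | mem f hf => exact h f hf
    | zero => simpa using tendsto_const_nhds
    | add f g _ _ hf hg =>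
      simpa [integral_add (hint _ f) (hint _ g)] using hf.add hg
    | smul c f _ hf => simpa [integral_const_mul] using hf.const_mul c
  have hclosed := (LipschitzWith.uniformEquicontinuous _ 1 fun i ↦
    lipschitzWith_integral_continuousMap (ν i : Measure X)).equicontinuous
      |>.isClosed_setOfPred_tendsto (l := l)
        (lipschitzWith_integral_continuousMap (μ : Measure X)).continuous
  rw [ProbabilityMeasure.tendsto_iff_forall_integral_rclike_tendsto ℂ]
  intro f
  refine hclosed.closure_subset_iff.2 hspan (?_ : f.toContinuousMap ∈ _)
  rw [← Submodule.topologicalClosure_coe, hs]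
  exact Set.mem_univ _

theorem topologicalClosure_span_mFourier_comp {X d : Type*} [TopologicalSpace X] [CompactSpace X]
    [Fintype d] (φ : C(X, UnitAddTorus d)) (hφ : Function.Injective φ) :
    (Submodule.span ℂ
      (Set.range fun k : d → ℤ ↦ (UnitAddTorus.mFourier k).comp φ)).topologicalClosure = ⊤ := by
  have hdense : DenseRange (ContinuousMap.compCLM ℂ ℂ φ) := by
    refine Function.Surjective.denseRange fun f ↦ ?_
    obtain ⟨g, hg⟩ := ContinuousMap.exists_extension (φ.continuous.isClosedEmbedding hφ) f
    exact ⟨g, hg⟩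
  have := hdense.topologicalClosure_map_submodule
    (UnitAddTorus.span_mFourier_closure_eq_top (d := d))
  rwa [Submodule.map_span, ← Set.range_comp] at this

theorem tendsto_probabilityMeasure_of_integral_mFourier_comp {d : Type*} [Fintype d]
    (φ : C(X, UnitAddTorus d)) (hφ : Function.Injective φ)
    (h : ∀ k, Tendsto (fun i ↦ ∫ y, UnitAddTorus.mFourier k (φ y) ∂(ν i : Measure X)) l
      (𝓝 (∫ y, UnitAddTorus.mFourier k (φ y) ∂(μ : Measure X)))) :
    Tendsto ν l (𝓝 μ) :=
  tendsto_probabilityMeasure_of_span_dense (topologicalClosure_span_mFourier_comp φ hφ)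
    (Set.forall_mem_range.2 h)

end WeakConvergence

/-- The uniform probability measure on the values of `x` along a nonempty finite set, each value
being weighted by its multiplicity. -/
noncomputable def empiricalMeasure {κ X : Type*} [MeasurableSpace X] (A : Finset κ)
    (hA : A.Nonempty) (x : κ → X) : ProbabilityMeasure X :=
  ⟨(A.card : ENNReal)⁻¹ • ∑ n ∈ A, Measure.dirac (x n), ⟨by
    simp [ENNReal.inv_mul_cancel, hA.ne_empty]⟩⟩

section EmpiricalMeasure

variable {κ X : Type*} [MeasurableSpace X] [MeasurableSingletonClass X] {A : Finset κ}
  (hA : A.Nonempty) (x : κ → X)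

theorem integral_empiricalMeasure (f : X → ℂ) :
    ∫ y, f y ∂(empiricalMeasure A hA x : Measure X) = (A.card : ℂ)⁻¹ * ∑ n ∈ A, f (x n) := by
  change ∫ y, f y ∂((A.card : ENNReal)⁻¹ • ∑ n ∈ A, Measure.dirac (x n)) = _
  rw [integral_smul_measure, integral_finsetSum_measure fun n _ ↦ integrable_dirac (by simp)]
  simp

theorem empiricalMeasure_apply (s : Set X) :
    (empiricalMeasure A hA x s : ℝ) = (↑A ∩ x ⁻¹' s).ncard / A.card := by
  classical
  have hncard : (↑A ∩ x ⁻¹' s).ncard = (A.filter (x · ∈ s)).card := by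
    rw [← Set.ncard_coe_finset, Finset.coe_filter]; rfl
  change (((A.card : ENNReal)⁻¹ • ∑ n ∈ A, Measure.dirac (x n)) s).toReal = _
  rw [hncard, Measure.smul_apply, Measure.finsetSum_apply, smul_eq_mul, ENNReal.toReal_mul]
  simp only [Measure.dirac_apply, Set.indicator_apply, Pi.one_apply, Finset.sum_boole]
  simp [div_eq_inv_mul]

end EmpiricalMeasure

section Characters

variable {d : Type*} [Fintype d]

theorem mFourier_eq_toCircle (k : d → ℤ) (x : UnitAddTorus d) :
    UnitAddTorus.mFourier k x = AddCircle.toCircle (∑ j, k j • x j) := by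
  have h (s : Finset d) : (∏ j ∈ s, fourier (k j) (x j) : ℂ) =
      AddCircle.toCircle (∑ j ∈ s, k j • x j) := by
    induction s using Finset.cons_induction with
    | empty => simp
    | cons j s hj ih =>
      rw [Finset.prod_cons, Finset.sum_cons, ih, AddCircle.toCircle_add, Circle.coe_mul,
        fourier_apply]
  exact h Finset.univ

theorem mFourier_add_apply (k : d → ℤ) (x y : UnitAddTorus d) :
    UnitAddTorus.mFourier k (x + y) = UnitAddTorus.mFourier k x * UnitAddTorus.mFourier k y := by
  simp only [mFourier_eq_toCircle, ← Circle.coe_mul, ← AddCircle.toCircle_add, ←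
    Finset.sum_add_distrib, Pi.add_apply, smul_add]

theorem mFourier_nsmul_apply (k : d → ℤ) (n : ℕ) (x : UnitAddTorus d) :
    UnitAddTorus.mFourier k (n • x) = AddCircle.toCircle (n • ∑ j, k j • x j) := by
  simp only [mFourier_eq_toCircle, Pi.smul_apply, Finset.smul_sum, smul_comm n]

theorem mFourier_eq_one_iff {k : d → ℤ} {x : UnitAddTorus d} :
    UnitAddTorus.mFourier k x = 1 ↔ ∑ j, k j • x j = 0 := by
  rw [mFourier_eq_toCircle, Circle.coe_eq_one, ← AddCircle.toCircle_zero,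
    (AddCircle.injective_toCircle one_ne_zero).eq_iff]

theorem mFourier_sumElim {e : Type*} [Fintype e] (k : d ⊕ e → ℤ) (x : UnitAddTorus d)
    (y : UnitAddTorus e) :
    UnitAddTorus.mFourier k (Sum.elim x y) =
      UnitAddTorus.mFourier (k ∘ Sum.inl) x * UnitAddTorus.mFourier (k ∘ Sum.inr) y :=
  Fintype.prod_sum_type _

theorem not_isOfFinAddOrder_sum_smul {M : Type*} [AddCommGroup M] {a : d → M}
    (ha : LinearIndependent ℤ a) {k : d → ℤ} (hk : k ≠ 0) :
    ¬IsOfFinAddOrder (∑ j, k j • a j) := by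
  rw [isOfFinAddOrder_iff_zsmul_eq_zero]
  rintro ⟨n, hn, h⟩
  simp only [Finset.smul_sum, smul_smul] at h
  exact hk (funext fun j ↦
    (mul_eq_zero.1 (Fintype.linearIndependent_iff.1 ha _ h j)).resolve_left hn)

theorem integral_eq_zero_of_add_left {G : Type*} [AddGroup G] [MeasurableSpace G]
    [MeasurableAdd G] {μ : Measure G} [μ.IsAddLeftInvariant] {f : G → ℂ} {g : G} {c : ℂ}
    (hf : ∀ x, f (g + x) = c * f x) (hc : c ≠ 1) : ∫ x, f x ∂μ = 0 := by
  have h := integral_add_left_eq_self (μ := μ) f g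
  simp only [hf, integral_const_mul] at h
  exact (mul_left_eq_self₀.1 h).resolve_left hc

end Characters

theorem tendsto_inv_card_mul_sum_of_isLittleO {κ ι : Type*} {F : ι → Finset κ} {l : Filter ι}
    {u : κ → ℂ}
    (hu : (fun i ↦ ∑ n ∈ F i, u n) =o[l] fun i ↦ ((F i).card : ℝ)) :
    Tendsto (fun i ↦ ((F i).card : ℂ)⁻¹ * ∑ n ∈ F i, u n) l (𝓝 0) := by
  simpa [div_eq_inv_mul] using (Complex.isLittleO_ofReal_right.2 hu).tendsto_div_nhds_zero

section Equidistribution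

variable {ι d e : Type*} {F : ι → Finset ℕ} {l : Filter ι}
  {a : UnitAddTorus d} {μ : Measure (UnitAddTorus d)} [μ.IsAddLeftInvariant]
  {K : Type*} [AddCommGroup K] [TopologicalSpace K] {b : K} {f : K →ₜ+ UnitAddTorus e}

section FourierAverages

variable [Fintype d] [Fintype e]

theorem mFourier_comp_eq_one (hb : DenseRange fun n : ℤ ↦ n • b) {q : e → ℤ}
    (hq : ∑ j, q j • f b j = 0) (y : K) : UnitAddTorus.mFourier q (f y) = 1 := by
  have hcont : Continuous fun y ↦ UnitAddTorus.mFourier q (f y) :=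
    (UnitAddTorus.mFourier q).continuous.comp f.continuous_toFun
  refine congrFun (hb.equalizer hcont continuous_const (funext fun n ↦ ?_)) y
  simp only [Function.comp_apply, mFourier_eq_one_iff, map_zsmul, Pi.smul_apply, smul_comm _ n,
    ← Finset.smul_sum, hq, smul_zero]

variable [MeasurableSpace K] {ν : Measure K} [ν.IsAddLeftInvariant]

theorem integral_mFourier_comp_eq_zero [MeasurableAdd K] {q : e → ℤ}
    (hq : ∑ j, q j • f b j ≠ 0) : ∫ y, UnitAddTorus.mFourier q (f y) ∂ν = 0 :=
  integral_eq_zero_of_add_left (g := b) (fun y ↦ by rw [map_add, mFourier_add_apply])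
    (mFourier_eq_one_iff.not.2 hq)

theorem tendsto_inv_card_mul_sum_mFourier_sq_nsmul [IsProbabilityMeasure μ] [IsProbabilityMeasure ν]
    [MeasurableAdd K] (hF : IsFolner F l) (ha : LinearIndependent ℤ a)
    (hb : DenseRange fun n : ℤ ↦ n • b) (p : d → ℤ) (q : e → ℤ) :
    Tendsto (fun i ↦ ((F i).card : ℂ)⁻¹ * ∑ n ∈ F i,
      UnitAddTorus.mFourier p (n ^ 2 • a) * UnitAddTorus.mFourier q (f (n • b))) l
      (𝓝 ((∫ x, UnitAddTorus.mFourier p x ∂μ) * ∫ y, UnitAddTorus.mFourier q (f y) ∂ν)) := by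
  simp only [map_nsmul, mFourier_nsmul_apply, ← Circle.coe_mul, ← AddCircle.toCircle_add]
  obtain rfl | hp := eq_or_ne p 0
  · by_cases hq : ∑ j, q j • f b j = 0
    · have hF₀ (i : ι) : ((F i).card : ℂ) ≠ 0 := mod_cast (hF.nonempty i).card_ne_zero
      simpa [hq, hF₀, mFourier_comp_eq_one hb hq, UnitAddTorus.mFourier_zero]
        using tendsto_const_nhds
    · rw [integral_mFourier_comp_eq_zero hq, mul_zero]
      simpa using tendsto_inv_card_mul_sum_of_isLittleO
        (hF.isLittleO_sum_toCircle_nsmul one_ne_zero hq)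
  · have hγ := not_isOfFinAddOrder_sum_smul ha hp
    rw [integral_eq_zero_of_add_left (μ := μ) (mFourier_add_apply p a)
      (mFourier_eq_one_iff.not.2 fun h ↦ hγ (h ▸ .zero)), zero_mul]
    exact tendsto_inv_card_mul_sum_of_isLittleO
      (hF.isLittleO_sum_toCircle_sq_nsmul_add one_ne_zero hγ _)

end FourierAverages

theorem tendsto_empiricalMeasure_sq_nsmul_nsmul [Finite d] [Finite e] [CompactSpace K]
    [SecondCountableTopology K] [IsTopologicalAddGroup K] [MeasurableSpace K] [BorelSpace K]
    {μ : ProbabilityMeasure (UnitAddTorus d)}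
    [(μ : Measure (UnitAddTorus d)).IsAddLeftInvariant] {ν : ProbabilityMeasure K}
    [(ν : Measure K).IsAddLeftInvariant] (hF : IsFolner F l) (ha : LinearIndependent ℤ a)
    (hb : DenseRange fun n : ℤ ↦ n • b) (hf : Function.Injective f) :
    Tendsto (fun i ↦ empiricalMeasure (F i) (hF.nonempty i) fun n ↦ (n ^ 2 • a, n • b)) l
      (𝓝 (μ.prod ν)) := by
  have := Fintype.ofFinite d
  have := Fintype.ofFinite e
  have : T2Space K := .of_injective_continuous hf f.continuous_toFun
  let φ : C(UnitAddTorus d × K, UnitAddTorus (d ⊕ e)) :=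
    ⟨Homeomorph.sumArrowHomeomorphProdArrow.symm ∘ Prod.map id f, by fun_prop⟩
  have hφ : Function.Injective φ :=
    Homeomorph.sumArrowHomeomorphProdArrow.symm.injective.comp (Function.injective_id.prodMap hf)
  have hφ_mFourier (k : d ⊕ e → ℤ) (y : UnitAddTorus d × K) : UnitAddTorus.mFourier k (φ y) =
      UnitAddTorus.mFourier (k ∘ Sum.inl) y.1 * UnitAddTorus.mFourier (k ∘ Sum.inr) (f y.2) :=
    mFourier_sumElim k y.1 (f y.2)
  refine tendsto_probabilityMeasure_of_integral_mFourier_comp φ hφ fun k ↦ ?_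
  simp only [integral_empiricalMeasure, hφ_mFourier]
  rw [ProbabilityMeasure.toMeasure_prod, integral_prod_mul
    (fun x ↦ UnitAddTorus.mFourier (k ∘ Sum.inl) x)
    fun y ↦ UnitAddTorus.mFourier (k ∘ Sum.inr) (f y)]
  exact tendsto_inv_card_mul_sum_mFourier_sq_nsmul hF ha hb _ _

end Equidistribution

section NullFrontier

theorem frontier_iInter_subset_iUnion {X κ : Type*} [TopologicalSpace X] [Finite κ]
    (s : κ → Set X) : frontier (⋂ j, s j) ⊆ ⋃ j, frontier (s j) := by
  rintro x ⟨hclosure, hinterior⟩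
  rw [interior_iInter_of_finite, Set.mem_iInter, not_forall] at hinterior
  obtain ⟨j, hj⟩ := hinterior
  exact Set.mem_iUnion.2 ⟨j, closure_mono (Set.iInter_subset s j) hclosure, hj⟩

theorem measure_frontier_univ_pi_eq_zero {κ : Type*} [Fintype κ] {X : κ → Type*}
    [∀ j, TopologicalSpace (X j)] [∀ j, MeasurableSpace (X j)] {μ : ∀ j, Measure (X j)}
    [∀ j, SigmaFinite (μ j)] {s : ∀ j, Set (X j)} (hs : ∀ j, μ j (frontier (s j)) = 0) :
    Measure.pi μ (frontier (Set.univ.pi s)) = 0 := by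
  rw [Set.univ_pi_eq_iInter]
  exact measure_mono_null (frontier_iInter_subset_iUnion _) (measure_iUnion_null fun j ↦
    measure_mono_null ((continuous_apply j).frontier_preimage_subset _)
      (Measure.pi_eval_preimage_null μ (hs j)))

theorem measure_frontier_prod_eq_zero {X Y : Type*} [TopologicalSpace X] [MeasurableSpace X]
    [TopologicalSpace Y] [MeasurableSpace Y] {μ : Measure X} {ν : Measure Y} [SFinite ν]
    {s : Set X} {t : Set Y} (hs : μ (frontier s) = 0) (ht : ν (frontier t) = 0) :
    μ.prod ν (frontier (s ×ˢ t)) = 0 := by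
  simp [frontier_prod_eq, Measure.prod_prod, hs, ht]

theorem frontier_coe_image_Ico_subset {T : ℝ} (a b : ℝ) :
    frontier (((↑) : ℝ → AddCircle T) '' Set.Ico a b) ⊆ {↑a, ↑b} := by
  rintro x ⟨hclosure, hinterior⟩
  have hclosed : IsClosed (((↑) : ℝ → AddCircle T) '' Set.Icc a b) :=
    (isCompact_Icc.image (AddCircle.continuous_mk' T)).isClosed
  have hopen : IsOpen (((↑) : ℝ → AddCircle T) '' Set.Ioo a b) :=
    QuotientAddGroup.isOpenMap_coe _ isOpen_Ioo
  obtain ⟨t, ⟨hat, htb⟩, rfl⟩ :=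
    closure_minimal (Set.image_mono Set.Ico_subset_Icc_self) hclosed hclosure
  obtain rfl | hat := hat.eq_or_lt
  · exact .inl rfl
  obtain rfl | htb := htb.eq_or_lt
  · exact .inr rfl
  exact absurd (interior_maximal (Set.image_mono Set.Ioo_subset_Ico_self) hopen
    ⟨t, ⟨hat, htb⟩, rfl⟩) hinterior

theorem volume_frontier_coe_image_Ico {T : ℝ} [Fact (0 < T)] (a b : ℝ) :
    volume (frontier (((↑) : ℝ → AddCircle T) '' Set.Ico a b)) = 0 := by
  have hpoint (x : AddCircle T) : volume {x} = 0 := by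
    rw [← Metric.closedBall_zero, AddCircle.volume_closedBall]
    simp [(Fact.out : 0 < T).le]
  refine measure_mono_null (frontier_coe_image_Ico_subset a b) ?_
  rw [Set.insert_eq, measure_union_null (hpoint _) (hpoint _)]

theorem volume_frontier_ball {T : ℝ} [Fact (0 < T)] (x : AddCircle T) (ε : ℝ) :
    volume (frontier (Metric.ball x ε)) = 0 := by
  refine measure_mono_null (t := Metric.closedBall x ε \ Metric.ball x ε) ?_ ?_
  · rw [Metric.isOpen_ball.frontier_eq]
    exact Set.sdiff_subset_sdiff_left Metric.closure_ball_subset_closedBall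
  · exact ae_le_set.1 AddCircle.closedBall_ae_eq_ball.le

theorem finite_range_or_surjective_addCircle {K : Type*} [AddGroup K] [TopologicalSpace K]
    [CompactSpace K] {T : ℝ} [Fact (0 < T)] {f : K →+ AddCircle T} (hf : Continuous f) :
    (Set.range f).Finite ∨ Function.Surjective f := by
  by_cases hdense : DenseRange f
  · exact .inr (Set.range_eq_univ.1
      ((isCompact_range hf).isClosed.closure_eq ▸ hdense.closure_range))
  · rw [DenseRange, ← AddMonoidHom.coe_range,
      AddCircle.dense_addSubgroup_iff_ne_zmultiples] at hdense
    push Not at hdense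
    obtain ⟨x, hx, hrange⟩ := hdense
    left
    rw [← AddMonoidHom.coe_range, hrange]
    exact (addOrderOf_ne_zero_iff.1 hx).finite_zmultiples

theorem measure_frontier_preimage_addCircle_eq_zero {K : Type*} [AddGroup K] [TopologicalSpace K]
    [IsTopologicalAddGroup K] [CompactSpace K] [MeasurableSpace K] [BorelSpace K]
    {ν : Measure K} [ν.IsAddHaarMeasure] [IsProbabilityMeasure ν] {T : ℝ} [Fact (0 < T)]
    {μ : Measure (AddCircle T)} [μ.IsAddHaarMeasure] [IsProbabilityMeasure μ]
    {f : K →+ AddCircle T} (hf : Continuous f) {s : Set (AddCircle T)} (hs : μ (frontier s) = 0) :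
    ν (frontier (f ⁻¹' s)) = 0 := by
  obtain hfin | hsurj := finite_range_or_surjective_addCircle hf
  · have := hfin.to_subtype
    have hclopen : IsClopen (Set.rangeFactorization f ⁻¹' ((↑) ⁻¹' s)) :=
      (isClopen_discrete _).preimage hf.rangeFactorization
    have hpre : f ⁻¹' s = Set.rangeFactorization f ⁻¹' ((↑) ⁻¹' s) := rfl
    rw [hpre, hclopen.frontier_eq, measure_empty]
  · exact measure_mono_null (hf.frontier_preimage_subset s)
      ((f.measurePreserving hf hsurj (by simp)).quasiMeasurePreserving.preimage_null hs)

end NullFrontier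

section ConditionalFrequency

variable {κ ι X Y : Type*} {l : Filter ι} {F : ι → Finset κ} {hF : ∀ i, (F i).Nonempty}
  [TopologicalSpace X] [MeasurableSpace X] [MeasurableSingletonClass X]
  [TopologicalSpace Y] [MeasurableSpace Y] [MeasurableSingletonClass Y]
  [OpensMeasurableSpace (X × Y)] [HasOuterApproxClosed (X × Y)]
  {x : κ → X} {y : κ → Y} {μ : ProbabilityMeasure X} {ν : ProbabilityMeasure Y}
  {s : Set X} {t : Set Y}

theorem tendsto_ncard_inter_div_card
    (h : Tendsto (fun i ↦ empiricalMeasure (F i) (hF i) fun n ↦ (x n, y n)) l (𝓝 (μ.prod ν)))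
    (hs : (μ : Measure X) (frontier s) = 0) (ht : (ν : Measure Y) (frontier t) = 0) :
    Tendsto (fun i ↦ ((↑(F i) ∩ (x ⁻¹' s ∩ y ⁻¹' t)).ncard / (F i).card : ℝ)) l
      (𝓝 (μ s * ν t)) := by
  have hst : (μ.prod ν : Measure (X × Y)) (frontier (s ×ˢ t)) = 0 :=
    measure_frontier_prod_eq_zero hs ht
  have := NNReal.tendsto_coe.2 (ProbabilityMeasure.tendsto_measure_of_null_frontier_of_tendsto h
    ((ProbabilityMeasure.null_iff_toMeasure_null _ _).2 hst))
  simpa only [empiricalMeasure_apply, ProbabilityMeasure.prod_prod, NNReal.coe_mul,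
    Set.mk_preimage_prod] using this

theorem eventually_nonempty_and_tendsto_ncard_inter_div_ncard
    (h : Tendsto (fun i ↦ empiricalMeasure (F i) (hF i) fun n ↦ (x n, y n)) l (𝓝 (μ.prod ν)))
    (hs : (μ : Measure X) (frontier s) = 0) (ht : (ν : Measure Y) (frontier t) = 0)
    (ht₀ : ν t ≠ 0) :
    (∀ᶠ i in l, (↑(F i) ∩ y ⁻¹' t).Nonempty) ∧
      Tendsto (fun i ↦ ((↑(F i) ∩ (x ⁻¹' s ∩ y ⁻¹' t)).ncard / (↑(F i) ∩ y ⁻¹' t).ncard : ℝ)) l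
        (𝓝 (μ s)) := by
  have ht₀ : (ν t : ℝ) ≠ 0 := NNReal.coe_ne_zero.2 ht₀
  have hvisit : Tendsto (fun i ↦ ((↑(F i) ∩ y ⁻¹' t).ncard / (F i).card : ℝ)) l (𝓝 (ν t)) := by
    simpa using tendsto_ncard_inter_div_card h (s := Set.univ) (by simp) ht
  constructor
  · filter_upwards [hvisit.eventually_ne ht₀] with i hi
    exact Set.nonempty_of_ncard_ne_zero (Nat.cast_ne_zero.1 (div_ne_zero_iff.1 hi).1)
  · have hratio := (tendsto_ncard_inter_div_card h hs ht).div hvisit ht₀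
    rw [mul_div_cancel_right₀ _ ht₀] at hratio
    exact hratio.congr fun i ↦ div_div_div_cancel_right₀ (mod_cast (hF i).card_ne_zero) _ _

end ConditionalFrequency

theorem denseRange_zsmul_topologicalClosure_zmultiples {G : Type*} [AddGroup G]
    [TopologicalSpace G] [IsTopologicalAddGroup G] (g : G) :
    DenseRange fun n : ℤ ↦ n • (⟨g, AddSubgroup.le_topologicalClosure _
      (AddSubgroup.mem_zmultiples g)⟩ : (AddSubgroup.zmultiples g).topologicalClosure) := by
  rw [DenseRange, Subtype.dense_iff]
  refine (AddSubgroup.topologicalClosure_coe (s := AddSubgroup.zmultiples g)).le.trans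
    (closure_mono ?_)
  rintro _ ⟨n, rfl⟩
  exact ⟨_, ⟨n, rfl⟩, rfl⟩

local instance : IsProbabilityMeasure (volume : Measure (AddCircle (1 : ℝ))) := ⟨by simp⟩

theorem measure_frontier_setOf_forall_norm_lt {K e : Type*} [AddGroup K] [TopologicalSpace K]
    [IsTopologicalAddGroup K] [CompactSpace K] [MeasurableSpace K] [BorelSpace K] [Finite e]
    {ν : Measure K} [ν.IsAddHaarMeasure] [IsProbabilityMeasure ν] (f : K →ₜ+ UnitAddTorus e)
    (δ : ℝ) : ν (frontier {y | ∀ j, ‖f y j‖ < δ}) = 0 := by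
  have hcoord (j : e) : ν (frontier {y | ‖f y j‖ < δ}) = 0 := by
    have hball : {y | ‖f y j‖ < δ} =
        (Pi.evalAddMonoidHom _ j).comp (f : K →+ UnitAddTorus e) ⁻¹' Metric.ball 0 δ := by
      ext y; simp
    rw [hball]
    exact measure_frontier_preimage_addCircle_eq_zero
      ((continuous_apply j).comp f.continuous_toFun) (volume_frontier_ball 0 δ)
  rw [Set.ofPred_forall]
  exact measure_mono_null (frontier_iInter_subset_iUnion _) (measure_iUnion_null hcoord)

theorem IsFiniteRankBohr0.eventually_nonempty_and_tendsto_ncard_sq_nsmul {S : Set ℕ}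
    (hS : IsFiniteRankBohr0 S) {ι d : Type*} [Fintype d] {F : ι → Finset ℕ} {l : Filter ι}
    (hF : IsFolner F l) {a : UnitAddTorus d} (ha : LinearIndependent ℤ a) {J : Set (UnitAddTorus d)}
    (hJ : volume (frontier J) = 0) :
    (∀ᶠ i in l, (↑(F i) ∩ S).Nonempty) ∧
      Tendsto (fun i ↦ ((↑(F i) ∩ ((fun n : ℕ ↦ n ^ 2 • a) ⁻¹' J ∩ S)).ncard /
        (↑(F i) ∩ S).ncard : ℝ)) l (𝓝 (volume.real J)) := by
  obtain ⟨r, β, δ, hδ, rfl⟩ := hS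
  let K := (AddSubgroup.zmultiples β).topologicalClosure
  have : CompactSpace K := isCompact_iff_compactSpace.1 isClosed_closure.isCompact
  let f : K →ₜ+ UnitAddTorus (Fin r) := ⟨K.subtype, continuous_subtype_val⟩
  let ν : ProbabilityMeasure K := ⟨Measure.addHaarMeasure ⊤, ⟨Measure.addHaarMeasure_self⟩⟩
  let μ : ProbabilityMeasure (UnitAddTorus d) := ⟨volume, inferInstance⟩
  have : (ν : Measure K).IsAddHaarMeasure := Measure.isAddHaarMeasure_addHaarMeasure _
  have : (μ : Measure (UnitAddTorus d)).IsAddHaarMeasure :=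
    inferInstanceAs (volume : Measure (UnitAddTorus d)).IsAddHaarMeasure
  have hequi := tendsto_empiricalMeasure_sq_nsmul_nsmul (μ := μ) (ν := ν) (f := f) hF ha
    (denseRange_zsmul_topologicalClosure_zmultiples β) Subtype.val_injective
  have hopen : IsOpen {y | ∀ j, ‖f y j‖ < δ} := by
    rw [Set.ofPred_forall]
    exact isOpen_iInter_of_finite fun j ↦ isOpen_lt (by fun_prop) continuous_const
  have hpos : ν {y | ∀ j, ‖f y j‖ < δ} ≠ 0 :=
    (ν.null_iff_toMeasure_null _).not.2 (hopen.measure_ne_zero _ ⟨0, by simp [hδ]⟩)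
  exact eventually_nonempty_and_tendsto_ncard_inter_div_ncard hequi hJ
    (measure_frontier_setOf_forall_norm_lt f δ) hpos

theorem linearIndependent_coe_addCircle {m : ℕ} {α : Fin m → ℝ}
    (hα : LinearIndependent ℚ (Fin.cons (1 : ℝ) α : Fin (m + 1) → ℝ)) :
    LinearIndependent ℤ fun j ↦ (α j : AddCircle (1 : ℝ)) := by
  refine Fintype.linearIndependent_iff.2 fun k hk j ↦ ?_
  have hk₀ : ((∑ j, k j • α j : ℝ) : AddCircle (1 : ℝ)) = 0 := by
    simpa using hk
  obtain ⟨z, hz⟩ := (AddCircle.coe_eq_zero_iff 1).1 hk₀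
  have hrel : ∑ j, (Fin.cons (-z : ℚ) fun j ↦ (k j : ℚ) : Fin (m + 1) → ℚ) j •
      (Fin.cons (1 : ℝ) α : Fin (m + 1) → ℝ) j = 0 := by
    simpa [Fin.sum_univ_succ, Rat.smul_def, neg_add_eq_zero] using hz
  simpa using Fintype.linearIndependent_iff.1 hα _ hrel j.succ

theorem squares_well_distributed_along_bohr_sets_general
    (S : Set ℕ) (hS : IsFiniteRankBohr0 S) (m : ℕ) (α : Fin m → ℝ)
    (hα : LinearIndependent ℚ (Fin.cons (1 : ℝ) α : Fin (m + 1) → ℝ))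
    (I : Set (Fin m → AddCircle (1 : ℝ))) (hI : volume (frontier I) = 0) :
    ∀ ε : ℝ, 0 < ε → ∃ L : ℕ, ∀ M N : ℕ, M < N → N - M > L →
      (S ∩ Set.Ico M N).Nonempty ∧
      |(Set.ncard {n : ℕ | n ∈ S ∩ Set.Ico M N ∧
            (fun j ↦ ((((n : ℝ) ^ 2 * α j : ℝ)) : AddCircle (1 : ℝ))) ∈ I} : ℝ) /
          ((S ∩ Set.Ico M N).ncard : ℝ) - (volume I).toReal| < ε := by
  intro ε hε
  obtain ⟨hne, hratio⟩ := hS.eventually_nonempty_and_tendsto_ncard_sq_nsmul isFolner_Ico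
    (linearIndependent_coe_addCircle hα) hI
  obtain ⟨L, -, hL⟩ := (atTop_basis.comap Prod.fst).eventually_iff.1
    (hne.and (Metric.tendsto_nhds.1 hratio ε hε))
  refine ⟨L, fun M N hMN hNM ↦ ?_⟩
  obtain ⟨k, rfl⟩ := Nat.exists_eq_add_of_lt hMN
  have hsq (n : ℕ) : (fun j ↦ (((n : ℝ) ^ 2 * α j : ℝ) : AddCircle (1 : ℝ))) =
      n ^ 2 • fun j ↦ (α j : AddCircle (1 : ℝ)) := by
    ext j
    simp [← AddCircle.coe_nsmul]
  have hset : {n : ℕ | n ∈ S ∩ Set.Ico M (M + k + 1) ∧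
      (fun j ↦ (((n : ℝ) ^ 2 * α j : ℝ) : AddCircle (1 : ℝ))) ∈ I} =
      Set.Ico M (M + k + 1) ∩
        ((fun n : ℕ ↦ n ^ 2 • fun j ↦ (α j : AddCircle (1 : ℝ))) ⁻¹' I ∩ S) := by
    ext n
    simp only [hsq]
    grind
  have hwindow := @hL (k, M) (by simp; lia)
  rw [hset, Set.inter_comm S]
  simpa [Real.dist_eq, Measure.real] using hwindow

theorem squares_well_distributed_along_bohr_sets
    (S : Set ℕ) (hS : IsFiniteRankBohr0 S)
    (m : ℕ) (α : Fin m → ℝ)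
    (hα : LinearIndependent ℚ (Fin.cons (1 : ℝ) α : Fin (m + 1) → ℝ))
    (lo hi : Fin m → ℝ) (I : Set (Fin m → AddCircle (1 : ℝ)))
    (hI : I = {x : Fin m → AddCircle (1 : ℝ) |
      ∀ j, x j ∈ (fun t : ℝ => (t : AddCircle (1 : ℝ))) '' Set.Ico (lo j) (hi j)}) :
    ∀ ε : ℝ, 0 < ε → ∃ L : ℕ, ∀ M N : ℕ, M < N → N - M > L →
      (S ∩ Set.Ico M N).Nonempty ∧
      |(Set.ncard {n : ℕ | n ∈ S ∩ Set.Ico M N ∧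
            (fun j => ((((n : ℝ) ^ 2 * α j : ℝ)) : AddCircle (1 : ℝ))) ∈ I} : ℝ) /
          ((S ∩ Set.Ico M N).ncard : ℝ) - (volume I).toReal| < ε := by
  have hbox : I = Set.univ.pi fun j ↦ (↑) '' Set.Ico (lo j) (hi j) :=
    hI.trans (Set.ext fun x ↦ Set.mem_univ_pi.symm)
  exact squares_well_distributed_along_bohr_sets_general S hS m α hα I (hbox ▸
    measure_frontier_univ_pi_eq_zero fun j ↦ volume_frontier_coe_image_Ico (lo j) (hi j))
end
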